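/- arXiv:1404.3127 — 5 statements merged into one kernel-verified Lean document; each statement's English description precedes it below -/
import Mathlib

section
/- Let p ∈ (0,1) and q = 1-p. Let f : ℝ → ℝ be continuously differentiable with f ∈ L^p(ℝ) and f' bounded and in L^p(ℝ). Then ‖f‖_∞ ≤ ‖f'‖_∞^q · ‖f'‖_p^p. -/
open Real MeasureTheory Filter Set

noncomputable def pNorm (p : ℝ) (f : ℝ → ℝ) : ℝ := (∫ x : ℝ, |f x| ^ p) ^ (1 / p)

noncomputable def supNorm (f : ℝ → ℝ) : ℝ := ⨆ x : ℝ, |f x|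

def MemLp' (p : ℝ) (f : ℝ → ℝ) : Prop := MeasureTheory.Integrable (fun x : ℝ => |f x| ^ p)

def BddFun (f : ℝ → ℝ) : Prop := ∃ C : ℝ, ∀ x, |f x| ≤ C

noncomputable def MNorm (p : ℝ) (M : ℕ → ℝ) (f : ℝ → ℝ) : ℝ :=
  ⨆ k : ℕ, pNorm p (iteratedDeriv k f) / M k

/-- The class `S`: smooth functions whose derivatives are all bounded and in `L^p`,
with finite Carleman–Sobolev quasi-norm, and `limsup ‖f^(k)‖_∞ ^ (q^k) ≤ 1`. -/
def MemS (p q : ℝ) (M : ℕ → ℝ) (f : ℝ → ℝ) : Prop :=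
  ContDiff ℝ (⊤ : ℕ∞) f ∧
  (∀ k, BddFun (iteratedDeriv k f) ∧ MemLp' p (iteratedDeriv k f)) ∧
  BddAbove (Set.range fun k : ℕ => pNorm p (iteratedDeriv k f) / M k) ∧
  Filter.limsup (fun k : ℕ => supNorm (iteratedDeriv k f) ^ (q ^ k)) Filter.atTop ≤ 1

/-- `μ_M = ∏_{k=1}^∞ M_k ^ (p q^(k-1))`, as a `tprod`. -/
noncomputable def muProd (p q : ℝ) (M : ℕ → ℝ) : ℝ := ∏' k : ℕ, M (k + 1) ^ (p * q ^ k)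

/-- Convergence of the product `μ_M`. -/
def MuFinite (p q : ℝ) (M : ℕ → ℝ) : Prop := Multipliable fun k : ℕ => M (k + 1) ^ (p * q ^ k)

/-!
Since `|f'| = |f'| ^ (1 - p) * |f'| ^ p ≤ ‖f'‖_∞ ^ (1 - p) * |f'| ^ p`, the values of `f` at any two
points differ by at most `‖f'‖_∞ ^ (1 - p) * ∫ |f'| ^ p`. If some positive power of `|f|` is
integrable over `ℝ`, then `|f|` takes arbitrarily small values, and comparing `f x` with such values
gives the bound on `|f x|`.
-/

theorem pNorm_rpow_self {p : ℝ} (hp : p ≠ 0) (f : ℝ → ℝ) :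
    pNorm p f ^ p = ∫ x, |f x| ^ p := by
  have hnonneg : 0 ≤ ∫ x, |f x| ^ p := integral_nonneg fun x => by positivity
  rw [pNorm, one_div, rpow_inv_rpow hnonneg hp]

theorem le_rpow_one_sub_mul_rpow {a b p : ℝ} (ha : 0 ≤ a) (hab : a ≤ b) (hp : 0 ≤ p)
    (hp1 : p ≤ 1) : a ≤ b ^ (1 - p) * a ^ p :=
  calc
    a = a ^ (1 - p) * a ^ p := by
      rw [← rpow_add_of_nonneg ha (sub_nonneg.2 hp1) hp, sub_add_cancel, rpow_one]
    _ ≤ b ^ (1 - p) * a ^ p := by gcongr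

theorem exists_norm_lt_of_integrable_norm_rpow {X E : Type*} [MeasurableSpace X]
    [SeminormedAddCommGroup E] {μ : Measure X} (hμ : μ univ = ⊤) {r : ℝ} (hr : 0 < r)
    {f : X → E} (hf : Integrable (fun x => ‖f x‖ ^ r) μ) {ε : ℝ} (hε : 0 < ε) :
    ∃ x, ‖f x‖ < ε := by
  by_contra! hlarge
  have superlevel_eq_univ : {x | ε ^ r ≤ ‖f x‖ ^ r} = univ :=
    eq_univ_of_forall fun x => rpow_le_rpow hε.le (hlarge x) hr.le
  have superlevel_lt_top := hf.measure_ge_lt_top (rpow_pos_of_pos hε r)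
  rw [superlevel_eq_univ, hμ] at superlevel_lt_top
  exact superlevel_lt_top.false

section Displacement

variable {E : Type*} [NormedAddCommGroup E] [NormedSpace ℝ E] {f : ℝ → E}

theorem norm_sub_le_integral_of_norm_deriv_le {B : ℝ → ℝ} (hf : Differentiable ℝ f)
    (hfB : ∀ᵐ t, ‖deriv f t‖ ≤ B t) (hB : Integrable B) (x y : ℝ) :
    ‖f x - f y‖ ≤ ∫ t, B t := by
  wlog hyx : y ≤ x generalizing x y
  · rw [norm_sub_rev]
    exact this y x (le_of_not_ge hyx)
  calc
    ‖f x - f y‖ ≤ ∫ t in y..x, B t :=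
      norm_sub_le_integral_of_norm_deriv_le_of_le hyx hf.continuous.continuousOn
        hf.differentiableOn (hfB.mono fun _ ht _ => ht) hB.intervalIntegrable
    _ = ∫ t in Ioc y x, B t := intervalIntegral.integral_of_le hyx
    _ ≤ ∫ t, B t :=
      setIntegral_le_integral hB (hfB.mono fun t ht => (norm_nonneg (deriv f t)).trans ht)

theorem norm_sub_le_rpow_mul_integral_norm_deriv_rpow {p C : ℝ} (hp : 0 ≤ p) (hp1 : p ≤ 1)
    (hf : Differentiable ℝ f) (hC : ∀ᵐ t, ‖deriv f t‖ ≤ C)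
    (hf' : Integrable fun t => ‖deriv f t‖ ^ p) (x y : ℝ) :
    ‖f x - f y‖ ≤ C ^ (1 - p) * ∫ t, ‖deriv f t‖ ^ p := by
  rw [← integral_const_mul]
  exact norm_sub_le_integral_of_norm_deriv_le hf
    (hC.mono fun t ht => le_rpow_one_sub_mul_rpow (norm_nonneg _) ht hp hp1)
    (hf'.const_mul _) x y

theorem sup_le_deriv_sup_rpow_mul_pNorm_rpow_general {p r : ℝ} (hp : 0 < p) (hp1 : p ≤ 1)
    (hr : 0 < r) (hf : Differentiable ℝ f) (hfr : Integrable fun t => ‖f t‖ ^ r)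
    (hbd : BddAbove (range fun t => ‖deriv f t‖))
    (hf' : Integrable fun t => ‖deriv f t‖ ^ p) (x : ℝ) :
    ‖f x‖ ≤ (⨆ t, ‖deriv f t‖) ^ (1 - p) * ∫ t, ‖deriv f t‖ ^ p := by
  refine le_of_forall_pos_le_add fun ε hε => ?_
  obtain ⟨y, hy⟩ := exists_norm_lt_of_integrable_norm_rpow Real.volume_univ hr hfr hε
  calc
    ‖f x‖ ≤ ‖f x - f y‖ + ‖f y‖ := norm_le_norm_sub_add _ _
    _ ≤ (⨆ t, ‖deriv f t‖) ^ (1 - p) * (∫ t, ‖deriv f t‖ ^ p) + ε := by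
      gcongr
      exact norm_sub_le_rpow_mul_integral_norm_deriv_rpow hp.le hp1 hf
        (.of_forall (le_ciSup hbd)) hf' x y

end Displacement

/-- basic estimate. If `f` is `C¹`, `f ∈ L^p`, and `f'` is bounded and in `L^p`,
then `‖f‖_∞ ≤ ‖f'‖_∞^q ‖f'‖_p^p`. -/
theorem sup_le_deriv_sup_rpow_mul_pNorm_rpow (p q : ℝ) (hp : 0 < p) (hp1 : p < 1)
    (hq : q = 1 - p) (f : ℝ → ℝ) (hf : ContDiff ℝ 1 f)
    (hfLp : MemLp' p f) (hbd : BddFun (deriv f)) (hfderivLp : MemLp' p (deriv f)) :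
    supNorm f ≤ supNorm (deriv f) ^ q * pNorm p (deriv f) ^ p := by
  rw [pNorm_rpow_self hp.ne', hq]
  exact ciSup_le <| sup_le_deriv_sup_rpow_mul_pNorm_rpow_general hp hp1.le hp
    (hf.differentiable one_ne_zero) hfLp (hbd.imp fun _ hC => forall_mem_range.2 hC) hfderivLp
end

section
/- Let c ∈ (0,1) and let (a_n)_{n≥0} be a decreasing summable sequence of positive reals satisfying ∑_{j>k} a_j ≤ (1-c) a_k for all k ≥ 0. For a > 0 let H_a = (1/a)·χ_{[0,a]} and let u_n = H_{a_0} * H_{a_1} * ⋯ * H_{a_n}. Then for each n the n-th derivative of u_n (which exists off a finite set, equivalently in the distributional sense) is supported on 2^n pairwise disjoint intervals I_1, …, I_{2^n}, each of length a_n, with I_1 = [0, a_n], and on each interval I_j the n-th derivative is constant equal to ±1/(a_0 a_1 ⋯ a_n); it vanishes off these intervals. -/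
open Real MeasureTheory Filter Set

/-- `H_a = (1/a) · χ_{[0,a]}`. -/
noncomputable def Hfun (a : ℝ) : ℝ → ℝ := Set.indicator (Set.Icc 0 a) fun _ => 1 / a

/-- Convolution of real functions on `ℝ`. -/
noncomputable def convFun (f g : ℝ → ℝ) : ℝ → ℝ := fun x => ∫ t : ℝ, f t * g (x - t)

/-- `u_n = H_{a_0} * H_{a_1} * ⋯ * H_{a_n}`. -/
noncomputable def uSeq (a : ℕ → ℝ) : ℕ → ℝ → ℝ
  | 0 => Hfun (a 0)
  | n + 1 => convFun (uSeq a n) (Hfun (a (n + 1)))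

/-- The separation condition `∑_{j>k} a_j ≤ (1-c) a_k` for all `k`. -/
def SepCond (c : ℝ) (a : ℕ → ℝ) : Prop := ∀ k : ℕ, ∑' j : ℕ, a (k + 1 + j) ≤ (1 - c) * a k

/-!
Convolving with `H_b` turns differentiation into a difference quotient,
`(f * H_b)' x = (f x - f (x - b)) / b`. Hence `u_n^(n)` is `(a_0 ⋯ a_n)⁻¹` times
`(1 - τ_{a_0}) ⋯ (1 - τ_{a_{n-1}}) χ_{[0, a_n]}`, where `τ_b` is translation by `b`. Expanding
the product gives one interval `[∑_{i ∈ s} a_i, ∑_{i ∈ s} a_i + a_n]` with sign `(-1)^|s|` for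
each `s ⊆ {0, …, n - 1}`. These intervals are pairwise disjoint as soon as every term exceeds the
sum of the later ones: two subset sums are compared at the least index where the subsets differ.
-/

section Calculus

lemma contDiffAt_succ_of_eventually_hasDerivAt {𝕜 F : Type*} [NontriviallyNormedField 𝕜]
    [NormedAddCommGroup F] [NormedSpace 𝕜 F] {f g : 𝕜 → F} {x : 𝕜} {n : ℕ}
    (hf : ∀ᶠ y in nhds x, HasDerivAt f (g y) y) (hg : ContDiffAt 𝕜 n g x) :
    ContDiffAt 𝕜 (n + 1) f x :=
  contDiffAt_succ_iff_hasFDerivAt.2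
    ⟨fun y => ContinuousLinearMap.toSpanSingleton 𝕜 (g y),
      ⟨_, hf, fun _ hy => hy.hasFDerivAt⟩,
      (ContinuousLinearMap.toSpanSingletonLIE 𝕜 F).contDiff.contDiffAt.comp x hg⟩

lemma contDiffAt_indicator_of_notMem_frontier {𝕜 E F : Type*} [NontriviallyNormedField 𝕜]
    [NormedAddCommGroup E] [NormedSpace 𝕜 E] [NormedAddCommGroup F] [NormedSpace 𝕜 F]
    {f : E → F} {s : Set E} {x : E} {n : WithTop ℕ∞}
    (hf : ContDiffAt 𝕜 n f x) (hx : x ∉ frontier s) : ContDiffAt 𝕜 n (s.indicator f) x := by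
  by_cases hxs : x ∈ interior s
  · refine hf.congr_of_eventuallyEq ?_
    filter_upwards [mem_interior_iff_mem_nhds.1 hxs] with y hy using indicator_of_mem hy f
  · have hxc : x ∉ closure s := fun h => hx ⟨h, hxs⟩
    refine (contDiffAt_const (c := 0)).congr_of_eventuallyEq ?_
    filter_upwards [isClosed_closure.isOpen_compl.mem_nhds hxc] with y hy
    exact indicator_of_notMem (fun h => hy (subset_closure h)) f

end Calculus

section BoxConvolution

lemma integrable_Hfun (b : ℝ) : Integrable (Hfun b) :=
  (integrable_indicator_iff measurableSet_Icc).2 (integrableOn_const (by simp))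

lemma integrable_convFun {f g : ℝ → ℝ} (hf : Integrable f) (hg : Integrable g) :
    Integrable (convFun f g) :=
  hf.integrable_convolution (ContinuousLinearMap.mul ℝ ℝ) hg

lemma integrable_uSeq (a : ℕ → ℝ) (n : ℕ) : Integrable (uSeq a n) := by
  induction n with
  | zero => exact integrable_Hfun _
  | succ n ih => exact integrable_convFun ih (integrable_Hfun _)

lemma contDiffAt_Hfun {b : ℝ} (hb : 0 ≤ b) {x : ℝ} (hx0 : x ≠ 0) (hxb : x ≠ b)
    {n : WithTop ℕ∞} : ContDiffAt ℝ n (Hfun b) x :=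
  contDiffAt_indicator_of_notMem_frontier contDiffAt_const (by simp [frontier_Icc hb, hx0, hxb])

variable {f : ℝ → ℝ} {b x : ℝ}

lemma convFun_Hfun (hb : 0 ≤ b) : convFun f (Hfun b) x = (∫ t in (x - b)..x, f t) / b := by
  have hpt (t : ℝ) : f t * Hfun b (x - t) = (Icc (x - b) x).indicator f t / b := by
    simp only [Hfun, indicator_apply, mem_Icc]
    grind
  simp only [convFun, hpt]
  rw [integral_div, integral_indicator measurableSet_Icc, integral_Icc_eq_integral_Ioc,
    intervalIntegral.integral_of_le (by linarith)]

lemma hasDerivAt_convFun_Hfun (hf : Integrable f) (hb : 0 ≤ b)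
    (hx : ContinuousAt f x) (hxb : ContinuousAt f (x - b)) :
    HasDerivAt (convFun f (Hfun b)) ((f x - f (x - b)) / b) x := by
  let F : ℝ → ℝ := fun y => ∫ t in (0 : ℝ)..y, f t
  have hF {y : ℝ} (hy : ContinuousAt f y) : HasDerivAt F (f y) y :=
    intervalIntegral.integral_hasDerivAt_right hf.intervalIntegrable
      hf.aestronglyMeasurable.stronglyMeasurableAtFilter hy
  have hconv : convFun f (Hfun b) = fun y => (F y - F (y - b)) / b := by
    ext y
    rw [convFun_Hfun hb, intervalIntegral.integral_interval_sub_left hf.intervalIntegrable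
      hf.intervalIntegrable]
  rw [hconv]
  exact ((hF hx).sub ((hF hxb).comp_sub_const x b)).div_const b

variable {n : ℕ}

lemma eventually_hasDerivAt_convFun_Hfun (hf : Integrable f) (hb : 0 ≤ b)
    (hx : ContDiffAt ℝ n f x) (hxb : ContDiffAt ℝ n f (x - b)) :
    ∀ᶠ y in nhds x, HasDerivAt (convFun f (Hfun b)) ((f y - f (y - b)) / b) y := by
  have hshift : Tendsto (fun y => y - b) (nhds x) (nhds (x - b)) :=
    (continuous_sub_right b).tendsto x
  filter_upwards [hx.eventually (by simp), hshift.eventually (hxb.eventually (by simp))]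
    with y hy hyb
  exact hasDerivAt_convFun_Hfun hf hb hy.continuousAt hyb.continuousAt

lemma contDiffAt_convFun_Hfun (hf : Integrable f) (hb : 0 ≤ b)
    (hx : ContDiffAt ℝ n f x) (hxb : ContDiffAt ℝ n f (x - b)) :
    ContDiffAt ℝ (n + 1) (convFun f (Hfun b)) x :=
  contDiffAt_succ_of_eventually_hasDerivAt (eventually_hasDerivAt_convFun_Hfun hf hb hx hxb)
    ((hx.sub (hxb.comp x (contDiffAt_id.sub contDiffAt_const))).div_const b)

lemma iteratedDeriv_succ_convFun_Hfun (hf : Integrable f) (hb : 0 ≤ b)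
    (hx : ContDiffAt ℝ n f x) (hxb : ContDiffAt ℝ n f (x - b)) :
    iteratedDeriv (n + 1) (convFun f (Hfun b)) x =
      b⁻¹ * (iteratedDeriv n f x - iteratedDeriv n f (x - b)) := by
  have hderiv : deriv (convFun f (Hfun b)) =ᶠ[nhds x] fun y => b⁻¹ * (f y - f (y - b)) := by
    filter_upwards [eventually_hasDerivAt_convFun_Hfun hf hb hx hxb] with y hy
    rw [hy.deriv, div_eq_inv_mul]
  have hshift : ContDiffAt ℝ n (fun y => f (y - b)) x :=
    hxb.comp x (contDiffAt_id.sub contDiffAt_const)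
  rw [iteratedDeriv_succ', hderiv.iteratedDeriv_eq, iteratedDeriv_const_mul_field,
    iteratedDeriv_fun_sub hx hshift, iteratedDeriv_comp_sub_const]

end BoxConvolution

section SignedStep

lemma eventually_cofinite_sub_const {G : Type*} [AddGroup G] {p : G → Prop}
    (hp : ∀ᶠ x in cofinite, p x) (b : G) : ∀ᶠ x in cofinite, p (x - b) :=
  (sub_left_injective (b := b)).tendsto_cofinite.eventually hp

/-- The step function `(1 - τ_{a_0}) ⋯ (1 - τ_{a_{n-1}}) χ_{[0, a_n]}`, where `τ_b` is translation
by `b`, with the product expanded over subsets of `{0, …, n - 1}`. Up to the factor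
`(a_0 ⋯ a_n)⁻¹` it is the `n`-th derivative of `uSeq a n`. -/
noncomputable def signedStep (a : ℕ → ℝ) (n : ℕ) (x : ℝ) : ℝ :=
  ∑ s ∈ (Finset.range n).powerset,
    (-1) ^ s.card * (Icc (∑ i ∈ s, a i) (∑ i ∈ s, a i + a n)).indicator 1 x

/-- Up to endpoints, both sides are `(1 - τ_A) (1 - τ_b)` applied to the indicator of `[t, ∞)`. -/
lemma indicator_Icc_sub_indicator_Icc_sub {G R : Type*} [AddCommGroup G] [LinearOrder G]
    [IsOrderedAddMonoid G] [AddGroupWithOne R] {t A b x : G} (hA : 0 ≤ A) (hb : 0 ≤ b)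
    (hxA : x ≠ t + A) (hxb : x ≠ t + b) :
    (Icc t (t + A)).indicator (1 : G → R) x - (Icc t (t + A)).indicator 1 (x - b) =
      (Icc t (t + b)).indicator 1 x - (Icc (t + A) (t + A + b)).indicator 1 x := by
  simp only [indicator_apply, mem_Icc, Pi.one_apply, le_sub_iff_add_le, sub_le_iff_le_add]
  grind [sub_self]

variable {a : ℕ → ℝ}

lemma eventually_signedStep_sub (ha : ∀ i, 0 ≤ a i) (n : ℕ) :
    ∀ᶠ x in cofinite,
      signedStep a n x - signedStep a n (x - a (n + 1)) = signedStep a (n + 1) x := by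
  have hne : ∀ᶠ x in cofinite, ∀ s ∈ (Finset.range n).powerset,
      x ≠ ∑ i ∈ s, a i + a n ∧ x ≠ ∑ i ∈ s, a i + a (n + 1) :=
    (Finset.eventually_all _).2 fun s _ =>
      (eventually_cofinite_ne _).and (eventually_cofinite_ne _)
  filter_upwards [hne] with x hx
  simp only [signedStep]
  rw [Finset.range_add_one, Finset.sum_powerset_insert Finset.notMem_range_self,
    ← Finset.sum_sub_distrib, ← Finset.sum_add_distrib]
  refine Finset.sum_congr rfl fun s hs => ?_
  have hns : n ∉ s := fun h => Finset.notMem_range_self (Finset.mem_powerset.1 hs h)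
  rw [← mul_sub, indicator_Icc_sub_indicator_Icc_sub (ha _) (ha _) (hx s hs).1 (hx s hs).2,
    Finset.card_insert_of_notMem hns, Finset.sum_insert hns, add_comm (a n)]
  ring

lemma eventually_contDiffAt_uSeq (ha : ∀ i, 0 ≤ a i) (n : ℕ) :
    ∀ᶠ x in cofinite, ContDiffAt ℝ n (uSeq a n) x := by
  induction n with
  | zero =>
    filter_upwards [eventually_cofinite_ne 0, eventually_cofinite_ne (a 0)] with x hx0 hxa
    exact contDiffAt_Hfun (ha 0) hx0 hxa
  | succ n ih =>
    filter_upwards [ih, eventually_cofinite_sub_const ih (a (n + 1))] with x hx hxb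
    exact contDiffAt_convFun_Hfun (integrable_uSeq a n) (ha _) hx hxb

lemma eventually_iteratedDeriv_uSeq (ha : ∀ i, 0 ≤ a i) (n : ℕ) :
    ∀ᶠ x in cofinite, iteratedDeriv n (uSeq a n) x =
      (∏ i ∈ Finset.range (n + 1), a i)⁻¹ * signedStep a n x := by
  induction n with
  | zero =>
    refine .of_forall fun x => ?_
    simp [uSeq, Hfun, signedStep, indicator_apply]
  | succ n ih =>
    have hsmooth := eventually_contDiffAt_uSeq ha n
    filter_upwards [ih, eventually_cofinite_sub_const ih (a (n + 1)), hsmooth,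
      eventually_cofinite_sub_const hsmooth (a (n + 1)), eventually_signedStep_sub ha n]
      with x hx hxb hcx hcxb hstep
    calc iteratedDeriv (n + 1) (uSeq a (n + 1)) x
        = (a (n + 1))⁻¹ * (iteratedDeriv n (uSeq a n) x
            - iteratedDeriv n (uSeq a n) (x - a (n + 1))) :=
          iteratedDeriv_succ_convFun_Hfun (integrable_uSeq a n) (ha _) hcx hcxb
      _ = (∏ i ∈ Finset.range (n + 2), a i)⁻¹ * signedStep a (n + 1) x := by
          rw [hx, hxb, ← mul_sub, hstep, Finset.prod_range_succ _ (n + 1), mul_inv]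
          ring

end SignedStep

section SubsetSums

variable {M : Type*} [AddCommMonoid M] [PartialOrder M] [IsOrderedCancelAddMonoid M]

lemma sum_lt_sum_of_sum_sdiff_lt {ι : Type*} [DecidableEq ι] {a : ι → M} (ha : ∀ i, 0 ≤ a i)
    {s t u : Finset ι} {m : ι} (hm : m ∈ s \ t) (hts : t \ s ⊆ u) (hu : ∑ i ∈ u, a i < a m) :
    ∑ i ∈ t, a i < ∑ i ∈ s, a i := by
  refine Finset.sum_sdiff_lt_sum_sdiff.1 ?_
  calc ∑ i ∈ t \ s, a i ≤ ∑ i ∈ u, a i :=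
        Finset.sum_le_sum_of_subset_of_nonneg hts fun i _ _ => ha i
    _ < a m := hu
    _ ≤ ∑ i ∈ s \ t, a i := Finset.single_le_sum (fun i _ => ha i) hm

lemma disjoint_Icc_sum_of_sum_Ioc_lt {ι : Type*} [LinearOrder ι] [LocallyFiniteOrder ι]
    {a : ι → M} (ha : ∀ i, 0 ≤ a i) {n : ι} (hlt : ∀ i < n, ∑ k ∈ Finset.Ioc i n, a k < a i)
    {s t : Finset ι} (hs : ∀ i ∈ s, i < n) (ht : ∀ i ∈ t, i < n) (hst : s ≠ t) :
    Disjoint (Icc (∑ i ∈ s, a i) (∑ i ∈ s, a i + a n))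
      (Icc (∑ i ∈ t, a i) (∑ i ∈ t, a i + a n)) := by
  obtain ⟨m, hm, hmin⟩ : ∃ m ∈ symmDiff s t, ∀ i ∈ symmDiff s t, m ≤ i :=
    Finset.exists_min_image _ id (Finset.symmDiff_nonempty.2 hst)
  wlog hms : m ∈ s generalizing s t
  · have hmt : m ∈ t := by grind [Finset.mem_symmDiff]
    rw [symmDiff_comm] at hm hmin
    exact (this ht hs hst.symm hm hmin hmt).symm
  have hms' : m ∈ s \ insert n t := by grind [Finset.mem_symmDiff]
  have hts : insert n t \ s ⊆ Finset.Ioc m n := by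
    intro i hi
    obtain ⟨hit, his⟩ := Finset.mem_sdiff.1 hi
    rcases Finset.mem_insert.1 hit with rfl | hit
    · exact Finset.right_mem_Ioc.2 (hs m hms)
    · have hmi : m ≤ i := hmin i (Finset.mem_symmDiff.2 (.inr ⟨hit, his⟩))
      exact Finset.mem_Ioc.2 ⟨hmi.lt_of_ne (ne_of_mem_of_not_mem hms his), (ht i hit).le⟩
  have hsum : ∑ i ∈ t, a i + a n < ∑ i ∈ s, a i := by
    rw [add_comm, ← Finset.sum_insert fun h => (ht n h).false]
    exact sum_lt_sum_of_sum_sdiff_lt ha hms' hts (hlt m (hs m hms))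
  exact Set.disjoint_left.2 fun x hxs hxt => (hsum.trans_le hxs.1).not_ge hxt.2

lemma SepCond.sum_Ioc_lt {c : ℝ} (hc : 0 < c) {a : ℕ → ℝ} (ha : ∀ i, 0 < a i)
    (hsum : Summable a) (hsep : SepCond c a) (i n : ℕ) :
    ∑ k ∈ Finset.Ioc i n, a k < a i := by
  have htail : Summable fun j => a (i + 1 + j) := by
    simpa only [add_comm] using (summable_nat_add_iff (i + 1)).2 hsum
  calc ∑ k ∈ Finset.Ioc i n, a k
      = ∑ j ∈ Finset.range (n + 1 - (i + 1)), a (i + 1 + j) := by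
        rw [← Finset.Ico_add_one_add_one_eq_Ioc, Finset.sum_Ico_eq_sum_range]
    _ ≤ ∑' j, a (i + 1 + j) := htail.sum_le_tsum _ fun j _ => (ha _).le
    _ ≤ (1 - c) * a i := hsep i
    _ < a i := mul_lt_of_lt_one_left (ha i) (by linarith)

end SubsetSums

section BinaryEnumeration

lemma forall_mem_toFinset_bitIndices_lt_iff {j n : ℕ} :
    (∀ i ∈ j.bitIndices.toFinset, i < n) ↔ j < 2 ^ n := by
  simp only [List.mem_toFinset, Nat.mem_bitIndices]
  refine ⟨fun h => Nat.lt_pow_two_of_testBit j fun i hi => ?_, fun h i hi => ?_⟩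
  · exact Bool.eq_false_iff.2 fun hji => (h i hji).not_ge hi
  · exact (Nat.pow_lt_pow_iff_right Nat.one_lt_two).1 ((Nat.ge_two_pow_of_testBit hi).trans_lt h)

lemma sum_powerset_range_eq_sum_range_two_pow {M : Type*} [AddCommMonoid M] (n : ℕ)
    (f : Finset ℕ → M) :
    ∑ s ∈ (Finset.range n).powerset, f s =
      ∑ j ∈ Finset.range (2 ^ n), f j.bitIndices.toFinset :=
  (Finset.sum_equiv Finset.equivBitIndices
    (fun j => by simp [Finset.subset_iff, ← forall_mem_toFinset_bitIndices_lt_iff])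
    fun _ _ => rfl).symm

end BinaryEnumeration

theorem uSeq_top_derivative_structure_general (a : ℕ → ℝ) (ha : ∀ i, 0 < a i) (n : ℕ)
    (hlt : ∀ i < n, ∑ k ∈ Finset.Ioc i n, a k < a i) :
    ∃ (E : Finset ℝ) (t : ℕ → ℝ) (sgn : ℕ → ℝ),
      t 0 = 0 ∧
      (∀ j < 2 ^ n, sgn j = 1 ∨ sgn j = -1) ∧
      (∀ i < 2 ^ n, ∀ j < 2 ^ n, i ≠ j →
        Disjoint (Set.Icc (t i) (t i + a n)) (Set.Icc (t j) (t j + a n))) ∧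
      ∀ x ∉ (E : Set ℝ),
        ContDiffAt ℝ (n : ℕ∞) (uSeq a n) x ∧
        iteratedDeriv n (uSeq a n) x =
          ∑ j ∈ Finset.range (2 ^ n),
            sgn j * Set.indicator (Set.Icc (t j) (t j + a n))
              (fun _ => (∏ i ∈ Finset.range (n + 1), a i)⁻¹) x := by
  have ha' : ∀ i, 0 ≤ a i := fun i => (ha i).le
  have hregular := (eventually_contDiffAt_uSeq ha' n).and (eventually_iteratedDeriv_uSeq ha' n)
  refine ⟨(eventually_cofinite.1 hregular).toFinset, fun j => ∑ i ∈ j.bitIndices.toFinset, a i,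
    fun j => (-1) ^ j.bitIndices.toFinset.card, by simp, fun j _ => neg_one_pow_eq_or ℝ _,
    fun i hi j hj hij => ?_, fun x hx => ?_⟩
  · exact disjoint_Icc_sum_of_sum_Ioc_lt ha' hlt (forall_mem_toFinset_bitIndices_lt_iff.2 hi)
      (forall_mem_toFinset_bitIndices_lt_iff.2 hj) (Finset.equivBitIndices.injective.ne hij)
  · obtain ⟨hsmooth, hderiv⟩ : ContDiffAt ℝ n (uSeq a n) x ∧ _ := by simpa using hx
    refine ⟨hsmooth, ?_⟩
    rw [hderiv, signedStep, sum_powerset_range_eq_sum_range_two_pow, Finset.mul_sum]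
    refine Finset.sum_congr rfl fun j _ => ?_
    simp [indicator_apply, mul_comm]

/-- structure of the top derivative of `u_n`. Off a finite exceptional set,
`u_n` is `n` times differentiable and its `n`-th derivative is a sum of `2^n` signed copies of
`(a_0⋯a_n)⁻¹` times indicators of pairwise disjoint intervals of length `a_n`, the leftmost
being `[0, a_n]`. -/
theorem uSeq_top_derivative_structure (c : ℝ) (hc : c ∈ Set.Ioo (0:ℝ) 1)
    (a : ℕ → ℝ) (ha : ∀ n, 0 < a n) (hmono : Antitone a) (hsum : Summable a)
    (hsep : SepCond c a) (n : ℕ) :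
    ∃ (E : Finset ℝ) (t : ℕ → ℝ) (sgn : ℕ → ℝ),
      t 0 = 0 ∧
      (∀ j < 2 ^ n, sgn j = 1 ∨ sgn j = -1) ∧
      (∀ i < 2 ^ n, ∀ j < 2 ^ n, i ≠ j →
        Disjoint (Set.Icc (t i) (t i + a n)) (Set.Icc (t j) (t j + a n))) ∧
      ∀ x ∉ (E : Set ℝ),
        ContDiffAt ℝ (n : ℕ∞) (uSeq a n) x ∧
        iteratedDeriv n (uSeq a n) x =
          ∑ j ∈ Finset.range (2 ^ n),
            sgn j * Set.indicator (Set.Icc (t j) (t j + a n))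
              (fun _ => (∏ i ∈ Finset.range (n + 1), a i)⁻¹) x :=
  uSeq_top_derivative_structure_general a ha n fun i _ => hsep.sum_Ioc_lt hc.1 ha hsum i n
end

section
/- Let c ∈ (0,1), let p ∈ (0,1), and let (a_n)_{n≥0} be a decreasing summable sequence of positive reals satisfying ∑_{j>k} a_j ≤ (1-c) a_k for all k ≥ 0. For a > 0 let H_a = (1/a)·χ_{[0,a]}, let u_n = H_{a_0} * ⋯ * H_{a_n}, and let u be the uniform limit of the u_n (which exists, is smooth, has integral 1, and is supported on [0, ∑_j a_j]). Then for every n ≥ 0 one has the equality ‖u^{(n)}‖_∞ = 1/(a_0 a_1 ⋯ a_n). -/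
open Real MeasureTheory Filter Set

/-!
Splitting off the first factor gives `u = H_{a 0} * w`, where `w` is the infinite convolution of the
shifted sequence `a 1, a 2, …`. Convolution with `H_{a 0}` is the average over a window of length
`a 0`, so `u' = (w - w(· - a 0)) / a 0` and hence
`u^(n+1) = (w^(n) - w^(n)(· - a 0)) / a 0`. As `w` lives on `[0, ∑_{j ≥ 1} a j] ⊆ [0, a 0]`, the two
terms have disjoint supports, so `‖u^(n+1)‖_∞ = ‖w^(n)‖_∞ / a 0` and the formula follows by
induction. For `n = 0`, the averages `u_k` never exceed `sup H_{a 0} = 1 / a 0`, and at `a 0` they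
only see the plateau of `H_{a 0}`.
-/

variable {E : Type*} [NormedAddCommGroup E]

theorem intervalIntegrable_of_locallyIntegrable {f : ℝ → E} (hf : LocallyIntegrable f) (x y : ℝ) :
    IntervalIntegrable f volume x y :=
  (hf.integrableOn_isCompact isCompact_uIcc).intervalIntegrable

variable [NormedSpace ℝ E]

section MovingAverage

/-- The average of `f` over the window of length `a` ending at `x`. For `0 < a` this is the
convolution `H_a * f`, see `convFun_Hfun`. -/
noncomputable def movingAverage (a : ℝ) (f : ℝ → E) (x : ℝ) : E := ⨍ t in (x - a)..x, f t

theorem movingAverage_eq_smul_integral (a : ℝ) (f : ℝ → E) (x : ℝ) :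
    movingAverage a f x = a⁻¹ • ∫ t in (x - a)..x, f t := by
  rw [movingAverage, interval_average_eq, sub_sub_cancel]

theorem movingAverage_comp_sub_const (a : ℝ) (f : ℝ → E) (c x : ℝ) :
    movingAverage a (fun t => f (t - c)) x = movingAverage a f (x - c) := by
  rw [movingAverage_eq_smul_integral, movingAverage_eq_smul_integral,
    intervalIntegral.integral_comp_sub_right, sub_right_comm]

theorem movingAverage_const_smul (a c : ℝ) (f : ℝ → E) (x : ℝ) :
    movingAverage a (fun t => c • f t) x = c • movingAverage a f x := by
  simp only [movingAverage_eq_smul_integral, intervalIntegral.integral_smul, smul_comm c]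

theorem movingAverage_sub (a : ℝ) {f g : ℝ → E} (hf : Continuous f) (hg : Continuous g) (x : ℝ) :
    movingAverage a (fun t => f t - g t) x = movingAverage a f x - movingAverage a g x := by
  simp only [movingAverage_eq_smul_integral, ← smul_sub]
  rw [intervalIntegral.integral_sub (hf.intervalIntegrable _ _) (hg.intervalIntegrable _ _)]

theorem movingAverage_eq_smul_sub_primitive {f : ℝ → E} (hf : LocallyIntegrable f) (a x : ℝ) :
    movingAverage a f x = a⁻¹ • ((∫ t in (0 : ℝ)..x, f t) - ∫ t in (0 : ℝ)..(x - a), f t) := by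
  have hint := intervalIntegrable_of_locallyIntegrable hf
  rw [movingAverage_eq_smul_integral,
    intervalIntegral.integral_interval_sub_left (hint _ _) (hint _ _)]

theorem continuous_movingAverage {f : ℝ → E} (hf : LocallyIntegrable f) (a : ℝ) :
    Continuous (movingAverage a f) := by
  have hprim : Continuous fun x => ∫ t in (0 : ℝ)..x, f t :=
    intervalIntegral.continuous_primitive (intervalIntegrable_of_locallyIntegrable hf) 0
  rw [funext (movingAverage_eq_smul_sub_primitive hf a)]
  fun_prop

theorem dist_movingAverage_le {f : ℝ → E} (hf : LocallyIntegrable f) {a B : ℝ}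
    (hB : ∀ t, ‖f t‖ ≤ B) (x y : ℝ) :
    dist (movingAverage a f x) (movingAverage a f y) ≤ |a|⁻¹ * (2 * B) * dist x y := by
  have hint := intervalIntegrable_of_locallyIntegrable hf
  have hright := intervalIntegral.norm_integral_le_of_norm_le_const (a := y) (b := x)
    fun t _ => hB t
  have hleft := intervalIntegral.norm_integral_le_of_norm_le_const (a := y - a) (b := x - a)
    fun t _ => hB t
  rw [sub_sub_sub_cancel_right] at hleft
  rw [dist_eq_norm, Real.dist_eq, movingAverage_eq_smul_integral, movingAverage_eq_smul_integral,
    ← smul_sub, norm_smul, norm_inv, Real.norm_eq_abs, mul_assoc,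
    intervalIntegral.integral_interval_sub_interval_comm' (hint _ _) (hint _ _) (hint _ _)]
  gcongr
  exact (norm_sub_le _ _).trans (by linarith)

theorem tendsto_movingAverage {ι : Type*} {l : Filter ι} [l.IsCountablyGenerated]
    {F : ι → ℝ → E} {f : ℝ → E} (hF : ∀ᶠ i in l, Continuous (F i)) (hlim : TendstoUniformly F f l)
    (a x : ℝ) : Tendsto (fun i => movingAverage a (F i) x) l (nhds (movingAverage a f x)) := by
  simp only [movingAverage_eq_smul_integral]
  exact (hlim.tendstoUniformlyOn.tendsto_intervalIntegral_of_continuousOn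
    (hF.mono fun _ h => h.continuousOn)).const_smul a⁻¹

variable [CompleteSpace E]

theorem movingAverage_mem {f : ℝ → E} (hf : LocallyIntegrable f) {a : ℝ} (ha : 0 < a) {s : Set E}
    (hs : Convex ℝ s) (hsc : IsClosed s) {x : ℝ} (hfs : ∀ t ∈ Icc (x - a) x, f t ∈ s) :
    movingAverage a f x ∈ s := by
  rw [movingAverage, uIoc_of_le (sub_le_self x ha.le)]
  refine hs.set_average_mem hsc ?_ measure_Ioc_lt_top.ne
    (ae_restrict_of_forall_mem measurableSet_Ioc fun t ht => hfs t (Ioc_subset_Icc_self ht))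
    ((hf.integrableOn_isCompact isCompact_Icc).mono_set Ioc_subset_Icc_self)
  simpa only [Real.volume_Ioc, sub_sub_cancel, ne_eq, ENNReal.ofReal_eq_zero, not_le] using ha

theorem eqOn_movingAverage_const {f : ℝ → E} (hf : LocallyIntegrable f) {a p q : ℝ} (ha : 0 < a)
    {k : E} (hk : EqOn f (fun _ => k) (Icc p q)) :
    EqOn (movingAverage a f) (fun _ => k) (Icc (p + a) q) := fun _ hx =>
  movingAverage_mem hf ha (convex_singleton k) isClosed_singleton fun _ ht =>
    hk ⟨(le_sub_iff_add_le.2 hx.1).trans ht.1, ht.2.trans hx.2⟩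

theorem support_movingAverage_subset {f : ℝ → E} (hf : LocallyIntegrable f) {a p q : ℝ}
    (ha : 0 < a) (hsupp : f.support ⊆ Icc p q) :
    (movingAverage a f).support ⊆ Icc p (q + a) := by
  intro x hx
  by_contra hout
  refine hx (movingAverage_mem hf ha (convex_singleton 0) isClosed_singleton fun t ht => ?_)
  refine Function.notMem_support.1 fun htsupp => hout ?_
  have hpq := hsupp htsupp
  exact ⟨hpq.1.trans ht.2, by linarith [ht.1, hpq.2]⟩

theorem hasDerivAt_movingAverage {f : ℝ → E} (hf : Continuous f) (a x : ℝ) :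
    HasDerivAt (movingAverage a f) (a⁻¹ • (f x - f (x - a))) x := by
  have hprim (y : ℝ) : HasDerivAt (fun z => ∫ t in (0 : ℝ)..z, f t) (f y) y :=
    (hf.integral_hasStrictDerivAt 0 y).hasDerivAt
  rw [funext (movingAverage_eq_smul_sub_primitive hf.locallyIntegrable a)]
  exact ((hprim x).sub ((hprim (x - a)).comp_sub_const x a)).const_smul a⁻¹

theorem deriv_movingAverage {f : ℝ → E} (hf : Continuous f) (a : ℝ) :
    deriv (movingAverage a f) = fun x => a⁻¹ • (f x - f (x - a)) :=
  funext fun x => (hasDerivAt_movingAverage hf a x).deriv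

-- With `F` a primitive of `f`, both sides are the difference quotient `a⁻¹ • (G x - G (x - a))`
-- of `G = movingAverage b F`, which is a primitive of `movingAverage b f`.
theorem movingAverage_comm {f : ℝ → E} (hf : LocallyIntegrable f) (a b : ℝ) :
    movingAverage a (movingAverage b f) = movingAverage b (movingAverage a f) := by
  ext x
  set F : ℝ → E := fun y => ∫ t in (0 : ℝ)..y, f t
  have hF : Continuous F :=
    intervalIntegral.continuous_primitive (intervalIntegrable_of_locallyIntegrable hf) 0
  have hquot (c : ℝ) : movingAverage c f = fun y => c⁻¹ • (F y - F (y - c)) :=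
    funext (movingAverage_eq_smul_sub_primitive hf c)
  have hprim (y : ℝ) : HasDerivAt (movingAverage b F) (movingAverage b f y) y := by
    rw [hquot]
    exact hasDerivAt_movingAverage hF b y
  calc movingAverage a (movingAverage b f) x
      = a⁻¹ • (movingAverage b F x - movingAverage b F (x - a)) := by
        rw [movingAverage_eq_smul_integral, intervalIntegral.integral_eq_sub_of_hasDerivAt
          (fun y _ => hprim y) ((continuous_movingAverage hf b).intervalIntegrable _ _)]
    _ = movingAverage b (movingAverage a f) x := by
        rw [hquot, movingAverage_const_smul, movingAverage_sub b hF (by fun_prop),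
          movingAverage_comp_sub_const]

theorem contDiff_movingAverage {f : ℝ → E} {n : ℕ} (hf : ContDiff ℝ n f) (a : ℝ) :
    ContDiff ℝ (n + 1) (movingAverage a f) := by
  refine contDiff_succ_iff_deriv.2
    ⟨fun x => (hasDerivAt_movingAverage hf.continuous a x).differentiableAt, by simp, ?_⟩
  rw [deriv_movingAverage hf.continuous]
  fun_prop

theorem iteratedDeriv_succ_movingAverage {f : ℝ → E} {n : ℕ} (hf : ContDiff ℝ n f) (a x : ℝ) :
    iteratedDeriv (n + 1) (movingAverage a f) x =
      a⁻¹ • (iteratedDeriv n f x - iteratedDeriv n f (x - a)) := by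
  have htrans : ContDiff ℝ n fun y => f (y - a) := by fun_prop
  rw [iteratedDeriv_succ', deriv_movingAverage hf.continuous, iteratedDeriv_fun_const_smul_field,
    iteratedDeriv_fun_sub hf.contDiffAt htrans.contDiffAt, iteratedDeriv_comp_sub_const]

end MovingAverage

theorem support_iteratedDeriv_subset_Ioo {f : ℝ → E} {n : ℕ} (hf : ContDiff ℝ n f) {p q : ℝ}
    (hsupp : f.support ⊆ Icc p q) : (iteratedDeriv n f).support ⊆ Ioo p q := by
  rw [← interior_Icc]
  refine interior_maximal (fun x hx => ?_) (hf.continuous_iteratedDeriv n le_rfl).isOpen_support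
  have hx' : x ∈ (iteratedFDeriv ℝ n f).support := fun h => hx (by simp [iteratedDeriv, h])
  exact closure_minimal hsupp isClosed_Icc (support_iteratedFDeriv_subset n hx')

theorem exists_tendstoUniformly_of_dist_le_of_summable {α β : Type*} [PseudoMetricSpace β]
    [CompleteSpace β] {f : ℕ → α → β} {d : ℕ → ℝ} (hf : ∀ n x, dist (f n x) (f (n + 1) x) ≤ d n)
    (hd : Summable d) : ∃ g, TendstoUniformly f g atTop := by
  have hcauchy (x : α) : ∃ y, Tendsto (f · x) atTop (nhds y) :=
    cauchySeq_tendsto_of_complete (cauchySeq_of_dist_le_of_summable d (hf · x) hd)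
  choose g hg using hcauchy
  refine ⟨g, Metric.tendstoUniformly_iff.2 fun ε hε => ?_⟩
  filter_upwards [(tendsto_sum_nat_add d).eventually (gt_mem_nhds hε)] with n hn x
  calc dist (g x) (f n x) = dist (f n x) (g x) := dist_comm _ _
    _ ≤ ∑' m, d (n + m) := dist_le_tsum_of_dist_le_of_tendsto d (hf · x) hd (hg x) n
    _ < ε := by simpa only [add_comm n] using hn

section SupNorm

theorem supNorm_const_mul (c : ℝ) (f : ℝ → ℝ) :
    supNorm (fun x => c * f x) = |c| * supNorm f := by
  simp only [supNorm, abs_mul, Real.mul_iSup_of_nonneg (abs_nonneg c)]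

theorem supNorm_sub_translate {f : ℝ → ℝ} {T : ℝ} (hf : f.support ⊆ Ioo 0 T) :
    supNorm (fun x => f x - f (x - T)) = supNorm f := by
  have hzero {x : ℝ} (hx : x ∉ Ioo 0 T) : f x = 0 :=
    Function.notMem_support.1 fun h => hx (hf h)
  refine congrArg sSup (Subset.antisymm ?_ ?_)
  · rintro _ ⟨x, rfl⟩
    rcases lt_or_ge x T with hx | hx
    · exact ⟨x, by simp [hzero fun h : x - T ∈ Ioo 0 T => (sub_neg.2 hx).not_gt h.1]⟩
    · exact ⟨x - T, by simp [hzero fun h : x ∈ Ioo 0 T => hx.not_gt h.2]⟩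
  · rintro _ ⟨x, rfl⟩
    by_cases hx : x ∈ Ioo 0 T
    · exact ⟨x, by simp [hzero fun h : x - T ∈ Ioo 0 T => (sub_neg.2 hx.2).not_gt h.1]⟩
    · refine ⟨0, ?_⟩
      simp [hzero hx, hzero (x := 0) fun h => h.1.false,
        hzero (x := -T) fun h => by linarith [h.1, h.2]]

theorem supNorm_iteratedDeriv_succ_movingAverage {f : ℝ → ℝ} {n : ℕ} (hf : ContDiff ℝ n f) {a : ℝ}
    (hsupp : f.support ⊆ Icc 0 a) :
    supNorm (iteratedDeriv (n + 1) (movingAverage a f)) =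
      |a|⁻¹ * supNorm (iteratedDeriv n f) := by
  rw [funext (iteratedDeriv_succ_movingAverage hf a)]
  simp only [smul_eq_mul]
  rw [supNorm_const_mul, supNorm_sub_translate (support_iteratedDeriv_subset_Ioo hf hsupp), abs_inv]

end SupNorm

section FiniteConvolution

theorem convFun_comm (f g : ℝ → ℝ) : convFun f g = convFun g f := by
  ext x
  unfold convFun
  rw [← integral_sub_left_eq_self (fun t => f t * g (x - t)) volume x]
  simp only [sub_sub_cancel, mul_comm]

theorem convFun_Hfun_s6 {a : ℝ} (ha : 0 < a) (f : ℝ → ℝ) :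
    convFun f (Hfun a) = movingAverage a f := by
  ext x
  have hwindow : (fun t => f t * Hfun a (x - t)) =
      (Icc (x - a) x).indicator fun t => a⁻¹ * f t := by
    ext t
    have hmem : x - t ∈ Icc 0 a ↔ t ∈ Icc (x - a) x := by
      rw [mem_Icc, mem_Icc, sub_nonneg, sub_le_comm, and_comm]
    by_cases ht : t ∈ Icc (x - a) x <;> simp [Hfun, indicator, hmem, ht, mul_comm]
  rw [convFun, hwindow, integral_indicator measurableSet_Icc, integral_const_mul,
    integral_Icc_eq_integral_Ioc, movingAverage_eq_smul_integral,
    intervalIntegral.integral_of_le (sub_le_self x ha.le), smul_eq_mul]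

theorem locallyIntegrable_Hfun (a : ℝ) : LocallyIntegrable (Hfun a) :=
  ((integrableOn_const (by simp)).integrable_indicator measurableSet_Icc).locallyIntegrable

variable {a : ℕ → ℝ} (ha : ∀ n, 0 < a n)
include ha

theorem uSeq_succ (n : ℕ) : uSeq a (n + 1) = movingAverage (a (n + 1)) (uSeq a n) :=
  convFun_Hfun_s6 (ha _) _

theorem locallyIntegrable_uSeq (n : ℕ) : LocallyIntegrable (uSeq a n) := by
  induction n with
  | zero => exact locallyIntegrable_Hfun (a 0)
  | succ n ih =>
    rw [uSeq_succ ha]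
    exact (continuous_movingAverage ih _).locallyIntegrable

theorem continuous_uSeq_succ (n : ℕ) : Continuous (uSeq a (n + 1)) := by
  rw [uSeq_succ ha]
  exact continuous_movingAverage (locallyIntegrable_uSeq ha n) _

theorem uSeq_succ_eq_movingAverage_shift (n : ℕ) :
    uSeq a (n + 1) = movingAverage (a 0) (uSeq (fun i => a (i + 1)) n) := by
  have hshift (i : ℕ) : 0 < a (i + 1) := ha _
  induction n with
  | zero => rw [uSeq, uSeq, uSeq, convFun_comm, convFun_Hfun_s6 (ha 0)]
  | succ n ih =>
    rw [uSeq_succ ha, ih, uSeq_succ hshift, movingAverage_comm (locallyIntegrable_uSeq hshift n)]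

theorem uSeq_mem_Icc (n : ℕ) (x : ℝ) : uSeq a n x ∈ Icc 0 (a 0)⁻¹ := by
  induction n generalizing x with
  | zero =>
    have hpos : 0 ≤ (a 0)⁻¹ := (inv_pos.2 (ha 0)).le
    by_cases hx : x ∈ Icc 0 (a 0) <;> simp [uSeq, Hfun, hx, hpos]
  | succ n ih =>
    rw [uSeq_succ ha]
    exact movingAverage_mem (locallyIntegrable_uSeq ha n) (ha _) (convex_Icc _ _) isClosed_Icc
      fun t _ => ih t

theorem support_uSeq_subset (n : ℕ) :
    (uSeq a n).support ⊆ Icc 0 (∑ i ∈ Finset.range (n + 1), a i) := by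
  induction n with
  | zero => simpa only [uSeq, Hfun, zero_add, Finset.sum_range_one] using support_indicator_subset
  | succ n ih =>
    rw [uSeq_succ ha, Finset.sum_range_succ]
    exact support_movingAverage_subset (locallyIntegrable_uSeq ha n) (ha _) ih

theorem eqOn_uSeq_plateau (n : ℕ) :
    EqOn (uSeq a n) (fun _ => (a 0)⁻¹) (Icc (∑ i ∈ Finset.range n, a (i + 1)) (a 0)) := by
  induction n with
  | zero =>
    intro x hx
    rw [Finset.sum_range_zero] at hx
    simp [uSeq, Hfun, hx]
  | succ n ih =>
    rw [uSeq_succ ha, Finset.sum_range_succ]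
    exact eqOn_movingAverage_const (locallyIntegrable_uSeq ha n) (ha _) ih

theorem dist_uSeq_succ_le (n : ℕ) (x y : ℝ) :
    dist (uSeq a (n + 1) x) (uSeq a (n + 1) y) ≤ (a 0)⁻¹ * (2 * (a 1)⁻¹) * dist x y := by
  have hshift (i : ℕ) : 0 < a (i + 1) := ha _
  have hbound (t : ℝ) : ‖uSeq (fun i => a (i + 1)) n t‖ ≤ (a 1)⁻¹ := by
    have ht := uSeq_mem_Icc hshift n t
    rw [Real.norm_of_nonneg ht.1]
    exact ht.2
  rw [uSeq_succ_eq_movingAverage_shift ha]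
  simpa only [abs_of_pos (ha 0)] using
    dist_movingAverage_le (locallyIntegrable_uSeq hshift n) (a := a 0) hbound x y

theorem exists_tendstoUniformly_uSeq (hsum : Summable a) :
    ∃ u, TendstoUniformly (uSeq a) u atTop := by
  set L := (a 0)⁻¹ * (2 * (a 1)⁻¹)
  have hL : 0 ≤ L := by have := ha 0; have := ha 1; positivity
  have hdist (n : ℕ) (x : ℝ) :
      dist (uSeq a (n + 1) x) (uSeq a (n + 1 + 1) x) ≤ L * a (n + 2) := by
    rw [dist_comm, uSeq_succ ha (n + 1), ← Metric.mem_closedBall]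
    refine movingAverage_mem (locallyIntegrable_uSeq ha _) (ha _) (convex_closedBall _ _)
      Metric.isClosed_closedBall fun t ht => ?_
    have htx : dist t x ≤ a (n + 2) := by
      rw [Real.dist_eq, abs_le]
      exact ⟨by linarith [ht.1], by linarith [ht.2, ha (n + 2)]⟩
    exact (dist_uSeq_succ_le ha n t x).trans (by gcongr)
  obtain ⟨u, hu⟩ := exists_tendstoUniformly_of_dist_le_of_summable hdist
    (((summable_nat_add_iff 2).2 hsum).mul_left L)
  refine ⟨u, fun V hV => ?_⟩
  rw [← map_add_atTop_eq_nat 1]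
  exact hu V hV

end FiniteConvolution

section InfiniteConvolution

variable {a : ℕ → ℝ} (ha : ∀ n, 0 < a n) {u : ℝ → ℝ} (hu : TendstoUniformly (uSeq a) u atTop)
include ha hu

theorem continuous_uSeq_limit : Continuous u :=
  hu.continuous (frequently_atTop.2 fun n => ⟨n + 1, n.le_succ, continuous_uSeq_succ ha n⟩)

theorem uSeq_limit_eq_movingAverage {w : ℝ → ℝ}
    (hw : TendstoUniformly (uSeq fun i => a (i + 1)) w atTop) : u = movingAverage (a 0) w := by
  have hcont : ∀ᶠ n in atTop, Continuous (uSeq (fun i => a (i + 1)) n) := by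
    filter_upwards [eventually_ge_atTop 1] with n hn
    obtain ⟨m, rfl⟩ := Nat.exists_eq_add_of_le' hn
    exact continuous_uSeq_succ (fun i => ha (i + 1)) m
  ext x
  refine tendsto_nhds_unique ((hu.tendsto_at x).comp (tendsto_add_atTop_nat 1)) ?_
  simpa only [Function.comp_def, uSeq_succ_eq_movingAverage_shift ha] using
    tendsto_movingAverage hcont hw (a 0) x

theorem contDiff_uSeq_limit (hsum : Summable a) (n : ℕ) : ContDiff ℝ n u := by
  induction n generalizing a u with
  | zero => exact contDiff_zero.2 (continuous_uSeq_limit ha hu)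
  | succ n ih =>
    have hshift (i : ℕ) : 0 < a (i + 1) := ha _
    have hsum' : Summable fun i => a (i + 1) := (summable_nat_add_iff 1).2 hsum
    obtain ⟨w, hw⟩ := exists_tendstoUniformly_uSeq hshift hsum'
    rw [uSeq_limit_eq_movingAverage ha hu hw]
    exact contDiff_movingAverage (ih hshift hw hsum') (a 0)

theorem support_uSeq_limit_subset (hsum : Summable a) : u.support ⊆ Icc 0 (∑' i, a i) := by
  intro x hx
  obtain ⟨n, hn⟩ := ((hu.tendsto_at x).eventually_ne hx).exists
  have hmem := support_uSeq_subset ha n hn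
  exact ⟨hmem.1, hmem.2.trans (hsum.sum_le_tsum _ fun i _ => (ha i).le)⟩

theorem supNorm_uSeq_limit (hsum : Summable a) (htail : ∑' j, a (j + 1) ≤ a 0) :
    supNorm u = (a 0)⁻¹ := by
  have hrange (x : ℝ) : u x ∈ Icc 0 (a 0)⁻¹ :=
    isClosed_Icc.mem_of_tendsto (hu.tendsto_at x) (.of_forall fun n => uSeq_mem_Icc ha n x)
  have hpartial (n : ℕ) : ∑ i ∈ Finset.range n, a (i + 1) ≤ a 0 :=
    (((summable_nat_add_iff 1).2 hsum).sum_le_tsum _ fun i _ => (ha _).le).trans htail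
  have hpeak : u (a 0) = (a 0)⁻¹ := by
    refine tendsto_nhds_unique (hu.tendsto_at _) (tendsto_const_nhds.congr fun n => ?_)
    exact (eqOn_uSeq_plateau ha n ⟨hpartial n, le_rfl⟩).symm
  have hgreatest : IsGreatest (range fun x => |u x|) (a 0)⁻¹ := by
    refine ⟨⟨a 0, by simp [hpeak, abs_of_pos (ha 0)]⟩, ?_⟩
    rintro _ ⟨x, rfl⟩
    exact (abs_of_nonneg (hrange x).1).trans_le (hrange x).2
  exact hgreatest.csSup_eq

end InfiniteConvolution

theorem sup_iteratedDeriv_of_infinite_convolution_general {a : ℕ → ℝ} (ha : ∀ n, 0 < a n)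
    (hsum : Summable a) (htail : ∀ k, ∑' j, a (j + (k + 1)) ≤ a k) {u : ℝ → ℝ}
    (hu : TendstoUniformly (uSeq a) u atTop) (n : ℕ) :
    supNorm (iteratedDeriv n u) = (∏ i ∈ Finset.range (n + 1), a i)⁻¹ := by
  induction n generalizing a u with
  | zero => simpa using supNorm_uSeq_limit ha hu hsum (htail 0)
  | succ n ih =>
    have hshift (i : ℕ) : 0 < a (i + 1) := ha _
    have hsum' : Summable fun i => a (i + 1) := (summable_nat_add_iff 1).2 hsum
    obtain ⟨w, hw⟩ := exists_tendstoUniformly_uSeq hshift hsum'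
    have hsupp : w.support ⊆ Icc 0 (a 0) :=
      (support_uSeq_limit_subset hshift hw hsum').trans (Icc_subset_Icc_right (htail 0))
    rw [uSeq_limit_eq_movingAverage ha hu hw,
      supNorm_iteratedDeriv_succ_movingAverage (contDiff_uSeq_limit hshift hw hsum' n) hsupp,
      ih hshift hsum' (fun k => htail (k + 1)) hw, abs_of_pos (ha 0), Finset.prod_range_succ' a,
      mul_inv_rev]

/-- If `u` is the uniform limit of the `u_n` (a smooth function), then
`‖u^(n)‖_∞ = 1/(a_0 a_1 ⋯ a_n)` for every `n`. -/
theorem sup_iteratedDeriv_of_infinite_convolution (c p : ℝ) (hc : c ∈ Set.Ioo (0:ℝ) 1)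
    (hp : p ∈ Set.Ioo (0:ℝ) 1)
    (a : ℕ → ℝ) (ha : ∀ n, 0 < a n) (hmono : Antitone a) (hsum : Summable a)
    (hsep : SepCond c a)
    (u : ℝ → ℝ) (hu : TendstoUniformly (fun n => uSeq a n) u Filter.atTop)
    (husmooth : ContDiff ℝ (⊤ : ℕ∞) u) (n : ℕ) :
    supNorm (iteratedDeriv n u) = (∏ i ∈ Finset.range (n + 1), a i)⁻¹ := by
  refine sup_iteratedDeriv_of_infinite_convolution_general ha hsum (fun k => ?_) hu n
  simpa only [add_comm] using (hsep k).trans (mul_le_of_le_one_left (ha k).le (by linarith [hc.1]))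
end

section
/- Let p ∈ (0,1) and let M = (M_k)_{k≥0} satisfy M_k ≥ 1 for all k. Then for every f ∈ L^p(ℝ) there exists a sequence (f_i)_{i≥0} of smooth functions, each with all derivatives in L^p(ℝ) and finite Carleman–Sobolev quasi-norm ‖f_i‖_M, such that: ‖f − f_i‖_p → 0 as i → ∞; sup_{n≥1} ‖f_i^{(n)}‖_p / M_n → 0 as i → ∞; the sequence (f_i) is Cauchy with respect to ‖·‖_M; and ‖f_i‖_M → ‖f‖_p / M_0. In particular L^p(ℝ) embeds canonically and continuously into the completion of the class C = {f smooth : ‖f‖_M < ∞} with respect to ‖·‖_M. -/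
open Real MeasureTheory Filter Set

/-! For `p ≤ 1` the functional `u ↦ ∫ |u| ^ p` is subadditive, and a ramp of height `1` and width
`h` has `∫ |ψ'| ^ p = h ^ (1 - p)`, which for `p < 1` tends to `0` with `h`: steep steps are cheap.
Repeated averaging of a jump over windows of rapidly decreasing widths `h 0, h 1, …` gives a smooth
step `ψ`. Up to a constant depending on `n`, the integral of `|ψ^(n+1)| ^ p` is at most
`(h 0 ⋯ h (n - 1)) ^ (-p) * h n ^ (1 - p)`, which is as small as prescribed for every `n` because
`h n` is chosen after `h 0, …, h (n - 1)`.
The infinitely averaged step is a fixed point of a monotone map, so no limit has to be taken.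
The functions that can be approximated by smooth ones with all derivatives small form a closed
subspace; it contains the indicators of intervals, and hence all of `L^p`.
-/

open scoped ENNReal NNReal Topology

section LintegralRpow

variable {α E : Type*} [MeasurableSpace α] [NormedAddCommGroup E] {μ : Measure α}
  {p : ℝ} {u v : α → E}

/-- The `p`-th power `∫ ‖u‖ ^ p ∂μ` of the `L^p` quasi-norm. For `0 < p ≤ 1` it is this power,
and not the quasi-norm itself, that satisfies the triangle inequality. -/
noncomputable def lintegralRpow (p : ℝ) (u : α → E) (μ : Measure α) : ℝ≥0∞ := ∫⁻ x, ‖u x‖ₑ ^ p ∂μ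

lemma lintegralRpow_zero (hp : 0 < p) : lintegralRpow p (0 : α → E) μ = 0 := by
  simp [lintegralRpow, hp]

lemma lintegralRpow_neg : lintegralRpow p (-u) μ = lintegralRpow p u μ := by
  simp [lintegralRpow]

lemma lintegralRpow_add_le (hp : 0 ≤ p) (hp1 : p ≤ 1) (hu : AEStronglyMeasurable u μ) :
    lintegralRpow p (u + v) μ ≤ lintegralRpow p u μ + lintegralRpow p v μ := by
  unfold lintegralRpow
  rw [← lintegral_add_left' (hu.enorm.pow_const p)]
  exact lintegral_mono fun x => (ENNReal.rpow_le_rpow (enorm_add_le _ _) hp).trans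
    (ENNReal.rpow_add_le_add_rpow _ _ hp hp1)

lemma lintegralRpow_sub_le (hp : 0 ≤ p) (hp1 : p ≤ 1) (hu : AEStronglyMeasurable u μ) :
    lintegralRpow p (u - v) μ ≤ lintegralRpow p u μ + lintegralRpow p v μ := by
  simpa only [sub_eq_add_neg, lintegralRpow_neg] using lintegralRpow_add_le hp hp1 (v := -v) hu

lemma lintegralRpow_const_smul {𝕜 : Type*} [NormedField 𝕜] [NormedSpace 𝕜 E] (hp : 0 ≤ p) (c : 𝕜)
    (u : α → E) : lintegralRpow p (c • u) μ = ‖c‖ₑ ^ p * lintegralRpow p u μ := by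
  simp only [lintegralRpow, Pi.smul_apply, enorm_smul, ENNReal.mul_rpow_of_nonneg _ _ hp]
  exact lintegral_const_mul' _ _ (ENNReal.rpow_ne_top_of_nonneg hp enorm_ne_top)

lemma lintegralRpow_comp_sub_right {G : Type*} [MeasurableSpace G] [AddGroup G] [MeasurableAdd G]
    {ν : Measure G} [ν.IsAddRightInvariant] (u : G → E) (a : G) :
    lintegralRpow p (fun x => u (x - a)) ν = lintegralRpow p u ν :=
  lintegral_sub_right_eq_self (fun x => ‖u x‖ₑ ^ p) a

lemma lintegralRpow_le_measure {s : Set α} (hp : 0 < p) (hle : ∀ x, ‖u x‖ ≤ 1)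
    (hzero : ∀ x ∉ s, u x = 0) : lintegralRpow p u μ ≤ μ s := by
  refine (lintegral_mono fun x => ?_).trans (lintegral_indicator_one_le s)
  by_cases hx : x ∈ s
  · simpa [hx] using ENNReal.rpow_le_one (by simpa [enorm] using! hle x) hp.le
  · simp [hx, hzero x hx, hp]

lemma lintegralRpow_eq_eLpNorm_rpow (hp : 0 < p) :
    lintegralRpow p u μ = eLpNorm u (ENNReal.ofReal p) μ ^ p := by
  rw [eLpNorm_eq_lintegral_rpow_enorm_toReal (by simpa using hp) ENNReal.ofReal_ne_top,
    ENNReal.toReal_ofReal hp.le, ← ENNReal.rpow_mul, one_div_mul_cancel hp.ne', ENNReal.rpow_one,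
    lintegralRpow]

lemma memLp_of_lintegralRpow_ne_top (hp : 0 < p) (hu : AEStronglyMeasurable u μ)
    (hfin : lintegralRpow p u μ ≠ ∞) : MemLp u (ENNReal.ofReal p) μ := by
  refine ⟨hu, lt_top_iff_ne_top.2 fun htop => hfin ?_⟩
  rw [lintegralRpow_eq_eLpNorm_rpow hp, htop, ENNReal.top_rpow_of_pos hp]

lemma tendsto_lintegralRpow {ι : Type*} {l : Filter ι} {F : ι → α → E} (hp : 0 ≤ p) (hp1 : p ≤ 1)
    (hu : AEStronglyMeasurable u μ) (hF : ∀ i, AEStronglyMeasurable (F i) μ)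
    (hfin : lintegralRpow p u μ ≠ ∞)
    (hlim : Tendsto (fun i => lintegralRpow p (F i - u) μ) l (𝓝 0)) :
    Tendsto (fun i => lintegralRpow p (F i) μ) l (𝓝 (lintegralRpow p u μ)) := by
  have lower : Tendsto (fun i => lintegralRpow p u μ - lintegralRpow p (F i - u) μ) l
      (𝓝 (lintegralRpow p u μ)) := by
    simpa using ENNReal.Tendsto.sub tendsto_const_nhds hlim (.inl hfin)
  have upper : Tendsto (fun i => lintegralRpow p u μ + lintegralRpow p (F i - u) μ) l
      (𝓝 (lintegralRpow p u μ)) := by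
    simpa using tendsto_const_nhds.add hlim
  refine tendsto_of_tendsto_of_tendsto_of_le_of_le lower upper (fun i => ?_) fun i => ?_
  · simpa [tsub_le_iff_right] using lintegralRpow_sub_le hp hp1 (v := F i - u) (hF i)
  · simpa using lintegralRpow_add_le hp hp1 (v := F i - u) hu

end LintegralRpow

section Density

variable {α : Type*} [MeasurableSpace α] {p : ℝ≥0∞} {μ : Measure α}

/-- Closedness of a set of functions under limits in `L^p`; the limit `f` need not lie in `L^p`
itself. -/
def IsLpClosed (p : ℝ≥0∞) (μ : Measure α) (V : Set (α → ℝ)) : Prop :=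
  ∀ f, AEStronglyMeasurable f μ → (∀ ε ≠ 0, ∃ g ∈ V, eLpNorm (f - g) p μ ≤ ε) → f ∈ V

lemma tendsto_measure_iUnion_sdiff {t : ℕ → Set α} (ht : ∀ n, MeasurableSet (t n))
    (hmono : Monotone t) (hfin : μ (⋃ n, t n) ≠ ∞) :
    Tendsto (fun n => μ ((⋃ m, t m) \ t n)) atTop (𝓝 0) := by
  have hempty : ⋂ n, (⋃ m, t m) \ t n = ∅ := by rw [← sdiff_iUnion, Set.sdiff_self]
  rw [← measure_empty (μ := μ), ← hempty]
  exact tendsto_measure_iInter_atTop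
    (fun n => ((MeasurableSet.iUnion ht).diff (ht n)).nullMeasurableSet)
    (fun m n hmn => sdiff_subset_sdiff_right (hmono hmn))
    ⟨0, measure_ne_top_of_subset sdiff_subset hfin⟩

lemma IsLpClosed.indicator_iUnion_mem {V : Set (α → ℝ)} (hV : IsLpClosed p μ V) (hp : p ≠ 0)
    (hp_top : p ≠ ∞) {t : ℕ → Set α} (ht : ∀ n, MeasurableSet (t n)) (hmono : Monotone t)
    (hfin : μ (⋃ n, t n) ≠ ∞) (hmem : ∀ n, (t n).indicator 1 ∈ V) :
    (⋃ n, t n).indicator 1 ∈ V := by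
  have hmeas : MeasurableSet (⋃ n, t n) := .iUnion ht
  refine hV _ (stronglyMeasurable_one.indicator hmeas).aestronglyMeasurable fun ε hε => ?_
  have hlim : Tendsto (fun n => μ ((⋃ m, t m) \ t n) ^ (1 / p.toReal)) atTop (𝓝 0) := by
    have hpos : 0 < 1 / p.toReal := one_div_pos.2 (ENNReal.toReal_pos hp hp_top)
    simpa only [ENNReal.zero_rpow_of_pos hpos] using
      (tendsto_measure_iUnion_sdiff ht hmono hfin).ennrpow_const (1 / p.toReal)
  obtain ⟨n, hn⟩ := (hlim.eventually_le_const (pos_iff_ne_zero.2 hε)).exists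
  refine ⟨_, hmem n, le_trans (le_of_eq ?_) hn⟩
  rw [← indicator_sdiff (subset_iUnion t n), Pi.one_def,
    eLpNorm_indicator_const (hmeas.diff (ht n)) hp hp_top, enorm_one, one_mul]

lemma IsLpClosed.indicator_inter_Ico_mem {μ : Measure ℝ} [IsLocallyFiniteMeasure μ]
    {V : Submodule ℝ (ℝ → ℝ)} (hV : IsLpClosed p μ (V : Set (ℝ → ℝ))) (hp : p ≠ 0)
    (hp_top : p ≠ ∞) (hIco : ∀ a b : ℝ, (Ico a b).indicator 1 ∈ V) {s : Set ℝ}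
    (hs : MeasurableSet s) (a b : ℝ) : (s ∩ Ico a b).indicator 1 ∈ V := by
  induction s, hs using MeasurableSpace.induction_on_inter
    ((BorelSpace.measurable_eq (α := ℝ)).trans (borel_eq_generateFrom_Ici ℝ)) isPiSystem_Ici with
  | empty =>
    rw [empty_inter, indicator_empty]
    exact V.zero_mem
  | basic t ht =>
    obtain ⟨c, rfl⟩ := ht
    rw [inter_comm, Ico_inter_Ici]
    exact hIco _ _
  | compl t _ ih =>
    rw [inter_comm, ← Set.sdiff_eq, ← sdiff_inter_self_eq_sdiff, indicator_sdiff inter_subset_right]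
    exact V.sub_mem (hIco a b) ih
  | iUnion t hdisj ht ih =>
    have hdisj' : Pairwise (Function.onFun Disjoint fun i => t i ∩ Ico a b) := fun i j hij =>
      (hdisj hij).mono inter_subset_left inter_subset_left
    rw [iUnion_inter, ← iUnion_accumulate]
    refine hV.indicator_iUnion_mem hp hp_top
      (fun n => .biUnion (to_countable _) fun i _ => (ht i).inter measurableSet_Ico)
      monotone_accumulate ?_ fun n => ?_
    · rw [iUnion_accumulate, ← iUnion_inter]
      exact measure_ne_top_of_subset inter_subset_right measure_Ico_lt_top.ne
    · induction n with
      | zero => exact (accumulate_zero_nat fun i => t i ∩ Ico a b).symm ▸ ih 0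
      | succ n hn =>
        rw [accumulate_succ,
          indicator_union_of_disjoint (disjoint_accumulate hdisj' n.lt_succ_self)]
        exact V.add_mem hn (ih (n + 1))

lemma iUnion_Ico_neg_nat : ⋃ n : ℕ, Ico (-n : ℝ) n = univ := by
  refine eq_univ_of_forall fun x => mem_iUnion.2 ?_
  obtain ⟨n, hn⟩ := exists_nat_gt |x|
  exact ⟨n, (abs_lt.1 hn).1.le, (abs_lt.1 hn).2⟩

lemma IsLpClosed.mem_of_memLp {μ : Measure ℝ} [IsLocallyFiniteMeasure μ]
    {V : Submodule ℝ (ℝ → ℝ)} (hV : IsLpClosed p μ (V : Set (ℝ → ℝ))) (hp : p ≠ 0)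
    (hp_top : p ≠ ∞) (hIco : ∀ a b : ℝ, (Ico a b).indicator 1 ∈ V) {f : ℝ → ℝ}
    (hf : MemLp f p μ) : f ∈ V := by
  have hindicator : ∀ s, MeasurableSet s → μ s < ∞ → s.indicator 1 ∈ V := by
    intro s hs hfin
    have hs_eq : ⋃ n : ℕ, s ∩ Ico (-n : ℝ) n = s := by
      rw [← inter_iUnion, iUnion_Ico_neg_nat, inter_univ]
    have hmono : Monotone fun n : ℕ => s ∩ Ico (-n : ℝ) n := fun m n hmn => by
      dsimp only
      gcongr
    exact hs_eq ▸ hV.indicator_iUnion_mem hp hp_top (fun n => hs.inter measurableSet_Ico) hmono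
      (by rw [hs_eq]; exact hfin.ne) fun n => hV.indicator_inter_Ico_mem hp hp_top hIco hs _ _
  have hsimple : ∀ (c : ℝ) s, MeasurableSet s → μ s < ∞ → (s.indicator fun _ => c) ∈ V := by
    intro c s hs hfin
    have hconst : c • s.indicator 1 = s.indicator fun _ => c := by
      ext x
      by_cases hx : x ∈ s <;> simp [hx]
    exact hconst ▸ V.smul_mem c (hindicator s hs hfin)
  refine hV f hf.1 fun ε hε => ?_
  obtain ⟨g, hfg, hg, -⟩ := hf.induction_dense hp_top (fun g => g ∈ V ∧ AEStronglyMeasurable g μ)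
    (fun c s hs hfin ε _ => ⟨_, by simp, hsimple c s hs hfin,
      (stronglyMeasurable_const.indicator hs).aestronglyMeasurable⟩)
    (fun g₁ g₂ h₁ h₂ => ⟨V.add_mem h₁.1 h₂.1, h₁.2.add h₂.2⟩) (fun g hg => hg.2) hε
  exact ⟨g, hg, hfg⟩

end Density

section AveragingTower

lemma integral_comp_sub_mul_le {f g : ℝ → ℝ} (hf : Monotone f) (hg : Monotone g) {h x y : ℝ}
    (hh : 0 ≤ h) (hle : ∀ t ∈ Icc (0 : ℝ) 1, f (x - h * t) ≤ g (y - h * t)) :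
    ∫ t in (0 : ℝ)..1, f (x - h * t) ≤ ∫ t in (0 : ℝ)..1, g (y - h * t) := by
  have hanti (z : ℝ) : Antitone fun t => z - h * t := fun s t hst => by dsimp only; gcongr
  exact intervalIntegral.integral_mono_on zero_le_one
    (hf.comp_antitone (hanti x)).intervalIntegrable (hg.comp_antitone (hanti y)).intervalIntegrable
    hle

/-- The average of `u` over windows of width `h`, i.e. the convolution of `u` with the uniform
probability density on `[0, h]`, as a monotone operator on monotone functions `ℝ → [0, 1]`. -/
noncomputable def windowAverage (h : ℝ) (hh : 0 ≤ h) :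
    (ℝ →o unitInterval) →o (ℝ →o unitInterval) where
  toFun u :=
    { toFun x := ⟨∫ t in (0 : ℝ)..1, (u (x - h * t) : ℝ), by
        have hmono : Monotone fun x => (u x : ℝ) := u.monotone
        constructor
        · simpa using integral_comp_sub_mul_le (f := fun _ => 0) (x := x) (y := x) monotone_const
            hmono hh fun t _ => (u (x - h * t)).2.1
        · simpa using integral_comp_sub_mul_le (g := fun _ => 1) (x := x) (y := x) hmono
            monotone_const hh fun t _ => (u (x - h * t)).2.2⟩
      monotone' x y hxy := integral_comp_sub_mul_le (f := fun x => (u x : ℝ))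
        (g := fun x => (u x : ℝ)) u.monotone u.monotone hh fun t _ => u.monotone (by gcongr) }
  monotone' u v huv x := integral_comp_sub_mul_le (f := fun x => (u x : ℝ))
    (g := fun x => (v x : ℝ)) u.monotone v.monotone hh fun t _ => huv _

lemma coe_windowAverage_apply {h : ℝ} (hh : 0 ≤ h) (u : ℝ →o unitInterval) (x : ℝ) :
    (windowAverage h hh u x : ℝ) = ∫ t in (0 : ℝ)..1, (u (x - h * t) : ℝ) := rfl

/-- The indicator of `[c, ∞)` as a monotone function `ℝ → [0, 1]`. -/
noncomputable def stepAt (c : ℝ) : ℝ →o unitInterval where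
  toFun x := if c ≤ x then 1 else 0
  monotone' x y hxy := by
    dsimp only
    split_ifs with hx hy
    · rfl
    · exact absurd (hx.trans hxy) hy
    · exact zero_le_one
    · rfl

lemma stepAt_of_le {c x : ℝ} (h : c ≤ x) : stepAt c x = 1 := if_pos h

lemma stepAt_of_lt {c x : ℝ} (h : x < c) : stepAt c x = 0 := if_neg h.not_ge

lemma antitone_stepAt : Antitone stepAt := fun a b hab x => by
  rcases lt_or_ge x b with hx | hx
  · exact (stepAt_of_lt hx).trans_le unitInterval.nonneg'
  · exact unitInterval.le_one'.trans_eq (stepAt_of_le (hab.trans hx)).symm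

lemma windowAverage_le_self {h : ℝ} (hh : 0 ≤ h) (u : ℝ →o unitInterval) :
    windowAverage h hh u ≤ u := fun x => by
  have hmono : Monotone fun x => (u x : ℝ) := u.monotone
  simpa [← Subtype.coe_le_coe, coe_windowAverage_apply] using
    integral_comp_sub_mul_le (g := fun _ => (u x : ℝ)) (x := x) (y := x) hmono monotone_const hh
      fun t ht => hmono (by nlinarith [ht.1])

lemma stepAt_le_windowAverage {h : ℝ} (hh : 0 ≤ h) (c : ℝ) :
    stepAt (c + h) ≤ windowAverage h hh (stepAt c) := fun x => by
  rcases lt_or_ge x (c + h) with hx | hx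
  · exact (stepAt_of_lt hx).trans_le unitInterval.nonneg'
  · have hmono : Monotone fun x => (stepAt c x : ℝ) := (stepAt c).monotone
    rw [stepAt_of_le hx, ← Subtype.coe_le_coe, coe_windowAverage_apply]
    simpa using integral_comp_sub_mul_le (f := fun _ => 1) (x := x) (y := x) monotone_const hmono
      hh fun t ht => by
        have : c ≤ x - h * t := by nlinarith [ht.2]
        simp [stepAt_of_le this]

/-- A tower of monotone steps `G k : ℝ → [0, 1]` rising from `0` to `1` within `[0, a k]`, each of
which is the average of the next one over windows of width `h k`. If `a k → 0` then `G 0` is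
the distribution function of `∑ h k * U k` for independent `U k` uniform on `[0, 1]`. -/
structure IsAveragingTower (h a : ℕ → ℝ) (G : ℕ → ℝ → ℝ) : Prop where
  pos : ∀ k, 0 < h k
  add_le : ∀ k, h k + a (k + 1) ≤ a k
  monotone : ∀ k, Monotone (G k)
  mem_Icc : ∀ k x, G k x ∈ Icc (0 : ℝ) 1
  eq_zero : ∀ k, ∀ x < 0, G k x = 0
  eq_one : ∀ k x, a k ≤ x → G k x = 1
  average : ∀ k x, G k x = ∫ t in (0 : ℝ)..1, G (k + 1) (x - h k * t)

lemma exists_fixedPoint_mem_Icc {β : Type*} [CompleteLattice β] (T : β →o β) {x y : β}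
    (hxy : x ≤ y) (hx : x ≤ T x) (hy : T y ≤ y) : ∃ z ∈ Icc x y, T z = z :=
  ⟨T.nextFixed x hx, ⟨T.le_nextFixed hx, (OrderHom.const β x ⊔ T).lfp_le (sup_le hxy hy)⟩,
    (T.nextFixed x hx).2⟩

lemma exists_isAveragingTower {h a : ℕ → ℝ} (hh : ∀ k, 0 < h k) (ha : ∀ k, 0 ≤ a k)
    (hha : ∀ k, h k + a (k + 1) ≤ a k) : ∃ G, IsAveragingTower h a G := by
  let T : (ℕ → ℝ →o unitInterval) →o (ℕ → ℝ →o unitInterval) :=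
    ⟨fun y k => windowAverage (h k) (hh k).le (y (k + 1)),
      fun y z hyz k => (windowAverage (h k) (hh k).le).monotone (hyz (k + 1))⟩
  obtain ⟨G, ⟨hLG, hGH⟩, hfix⟩ := exists_fixedPoint_mem_Icc T (x := fun k => stepAt (a k))
    (y := fun _ => stepAt 0) (fun k => antitone_stepAt (ha k))
    (fun k => (antitone_stepAt (by linarith [hha k])).trans
      (stepAt_le_windowAverage (hh k).le (a (k + 1))))
    (fun k => windowAverage_le_self (hh k).le _)
  refine ⟨fun k x => G k x, hh, hha, fun k => (G k).monotone, fun k x => (G k x).2,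
    fun k x hx => ?_, fun k x hx => ?_, fun k x => ?_⟩
  · exact le_antisymm (((hGH k) x).trans_eq (stepAt_of_lt hx)) (G k x).2.1
  · exact le_antisymm (G k x).2.2 ((stepAt_of_le hx).symm.trans_le ((hLG k) x))
  · exact congrArg (fun y => (y k x : ℝ)) hfix.symm

namespace IsAveragingTower

variable {h a : ℕ → ℝ} {G : ℕ → ℝ → ℝ}

lemma eq_inv_mul_integral_sub (hG : IsAveragingTower h a G) (k : ℕ) (x : ℝ) :
    G k x = (h k)⁻¹ *
      ((∫ t in (0 : ℝ)..x, G (k + 1) t) - ∫ t in (0 : ℝ)..(x - h k), G (k + 1) t) := by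
  have hint (a b : ℝ) : IntervalIntegrable (G (k + 1)) volume a b :=
    (hG.monotone _).intervalIntegrable
  rw [hG.average, intervalIntegral.integral_comp_sub_mul _ (hG.pos k).ne',
    intervalIntegral.integral_interval_sub_left (hint _ _) (hint _ _)]
  simp

lemma continuous (hG : IsAveragingTower h a G) (k : ℕ) : Continuous (G k) := by
  have hprim : Continuous fun x => ∫ t in (0 : ℝ)..x, G (k + 1) t :=
    intervalIntegral.continuous_primitive (fun _ _ => (hG.monotone _).intervalIntegrable) 0
  rw [funext (hG.eq_inv_mul_integral_sub k)]
  exact continuous_const.mul (hprim.sub (hprim.comp (continuous_id.sub continuous_const)))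

lemma hasDerivAt (hG : IsAveragingTower h a G) (k : ℕ) (x : ℝ) :
    HasDerivAt (G k) ((h k)⁻¹ * (G (k + 1) x - G (k + 1) (x - h k))) x := by
  have hprim (y : ℝ) : HasDerivAt (fun x => ∫ t in (0 : ℝ)..x, G (k + 1) t) (G (k + 1) y) y :=
    ((hG.continuous (k + 1)).integral_hasStrictDerivAt 0 y).hasDerivAt
  rw [funext (hG.eq_inv_mul_integral_sub k)]
  exact ((hprim x).sub ((hprim (x - h k)).comp_sub_const x (h k))).const_mul _

lemma deriv_eq (hG : IsAveragingTower h a G) (k : ℕ) :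
    deriv (G k) = (h k)⁻¹ • (G (k + 1) - fun x => G (k + 1) (x - h k)) :=
  funext fun x => (hG.hasDerivAt k x).deriv

lemma contDiff (hG : IsAveragingTower h a G) (k : ℕ) : ContDiff ℝ (⊤ : ℕ∞) (G k) := by
  refine contDiff_infty.2 fun n => ?_
  induction n generalizing k with
  | zero => exact contDiff_zero.2 (hG.continuous k)
  | succ n ih =>
    push_cast
    rw [contDiff_succ_iff_deriv, hG.deriv_eq]
    have hshift : ContDiff ℝ n fun x => G (k + 1) (x - h k) :=
      (ih (k + 1)).comp (contDiff_id.sub contDiff_const)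
    exact ⟨fun x => (hG.hasDerivAt k x).differentiableAt, by simp,
      ((ih (k + 1)).sub hshift).const_smul (h k)⁻¹⟩

lemma iteratedDeriv_succ_eq (hG : IsAveragingTower h a G) (k n : ℕ) :
    iteratedDeriv (n + 1) (G k) = (h k)⁻¹ •
      (iteratedDeriv n (G (k + 1)) - fun x => iteratedDeriv n (G (k + 1)) (x - h k)) := by
  have hsmooth : ContDiff ℝ n (G (k + 1)) := contDiff_infty.1 (hG.contDiff (k + 1)) n
  have hshift : ContDiff ℝ n fun x => G (k + 1) (x - h k) :=
    hsmooth.comp (contDiff_id.sub contDiff_const)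
  rw [iteratedDeriv_succ', hG.deriv_eq]
  ext x
  rw [iteratedDeriv_const_smul_field,
    iteratedDeriv_sub hsmooth.contDiffAt hshift.contDiffAt, iteratedDeriv_comp_sub_const]
  rfl

lemma lintegralRpow_deriv_le (hG : IsAveragingTower h a G) {p : ℝ} (hp : 0 < p) (k : ℕ) :
    lintegralRpow p (deriv (G k)) volume ≤ ‖(h k)⁻¹‖ₑ ^ p * ENNReal.ofReal (a k) := by
  have hle (x : ℝ) : ‖G (k + 1) x - G (k + 1) (x - h k)‖ ≤ 1 := by
    have hx := hG.mem_Icc (k + 1) x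
    have hxh := hG.mem_Icc (k + 1) (x - h k)
    rw [Real.norm_eq_abs, abs_le]
    constructor <;> linarith [hx.1, hx.2, hxh.1, hxh.2]
  have hzero : ∀ x ∉ Ico 0 (a k), G (k + 1) x - G (k + 1) (x - h k) = 0 := fun x hx => by
    have hpos := hG.pos k
    have hadd := hG.add_le k
    rcases lt_or_ge x 0 with hx0 | hx0
    · rw [hG.eq_zero _ _ hx0, hG.eq_zero _ _ (by linarith), sub_self]
    · have hax : a k ≤ x := not_lt.1 fun hxa => hx ⟨hx0, hxa⟩
      rw [hG.eq_one _ _ (by linarith), hG.eq_one _ _ (by linarith), sub_self]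
  rw [hG.deriv_eq, lintegralRpow_const_smul hp.le]
  gcongr
  exact (lintegralRpow_le_measure hp hle hzero).trans_eq (by simp)

lemma lintegralRpow_iteratedDeriv_le (hG : IsAveragingTower h a G) {p : ℝ} (hp : 0 < p)
    (hp1 : p ≤ 1) (n k : ℕ) :
    lintegralRpow p (iteratedDeriv (n + 1) (G k)) volume ≤
      (∏ j ∈ Finset.range n, 2 * ‖(h (k + j))⁻¹‖ₑ ^ p) *
        (‖(h (k + n))⁻¹‖ₑ ^ p * ENNReal.ofReal (a (k + n))) := by
  induction n generalizing k with
  | zero => simpa using hG.lintegralRpow_deriv_le hp k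
  | succ n ih =>
    have hmeas : AEStronglyMeasurable (iteratedDeriv (n + 1) (G (k + 1))) volume :=
      ((hG.contDiff _).continuous_iteratedDeriv _ (by exact_mod_cast le_top)).aestronglyMeasurable
    calc lintegralRpow p (iteratedDeriv (n + 2) (G k)) volume
        ≤ ‖(h k)⁻¹‖ₑ ^ p * (2 * lintegralRpow p (iteratedDeriv (n + 1) (G (k + 1))) volume) := by
          rw [hG.iteratedDeriv_succ_eq, lintegralRpow_const_smul hp.le, two_mul]
          gcongr
          exact (lintegralRpow_sub_le hp.le hp1 hmeas).trans_eq
            (congrArg _ (lintegralRpow_comp_sub_right _ _))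
      _ ≤ 2 * ‖(h k)⁻¹‖ₑ ^ p * ((∏ j ∈ Finset.range n, 2 * ‖(h (k + 1 + j))⁻¹‖ₑ ^ p) *
            (‖(h (k + 1 + n))⁻¹‖ₑ ^ p * ENNReal.ofReal (a (k + 1 + n)))) := by
          rw [mul_left_comm, ← mul_assoc]
          gcongr
          exact ih (k + 1)
      _ = _ := by
          simp only [Finset.prod_range_succ', add_zero, add_assoc, add_comm 1]
          ring

end IsAveragingTower

end AveragingTower

section SmoothStep

variable {p : ℝ}

lemma tendsto_enorm_inv_rpow_mul_ofReal (hp1 : p < 1) :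
    Tendsto (fun h : ℝ => ‖h⁻¹‖ₑ ^ p * ENNReal.ofReal (2 * h)) (𝓝[>] 0) (𝓝 0) := by
  have hreal : Tendsto (fun h : ℝ => ENNReal.ofReal (2 * h ^ (1 - p))) (𝓝[>] 0) (𝓝 0) := by
    have hpow : Tendsto (fun h : ℝ => 2 * h ^ (1 - p)) (𝓝 0) (𝓝 0) := by
      simpa [Real.zero_rpow (sub_pos.2 hp1).ne'] using
        ((Real.continuous_rpow_const (sub_pos.2 hp1).le).tendsto 0).const_mul 2
    simpa using ENNReal.tendsto_ofReal (hpow.mono_left nhdsWithin_le_nhds)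
  refine hreal.congr' (eventually_mem_nhdsWithin.mono fun h (hh : 0 < h) => ?_)
  simp only [Real.enorm_eq_ofReal (inv_pos.2 hh).le, ENNReal.ofReal_rpow_of_pos (inv_pos.2 hh)]
  rw [← ENNReal.ofReal_mul (by positivity), Real.inv_rpow hh.le, Real.rpow_sub hh, Real.rpow_one]
  ring_nf

lemma exists_scale (hp1 : p < 1) (c : ℝ≥0) {δ : ℝ} (hδ : 0 < δ) {t : ℝ≥0∞} (ht : t ≠ 0) :
    ∃ h, 0 < h ∧ h ≤ δ ∧ c * (‖h⁻¹‖ₑ ^ p * ENNReal.ofReal (2 * h)) ≤ t := by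
  have hlim : Tendsto (fun h : ℝ => c * (‖h⁻¹‖ₑ ^ p * ENNReal.ofReal (2 * h))) (𝓝[>] 0) (𝓝 0) := by
    simpa using ENNReal.Tendsto.const_mul (tendsto_enorm_inv_rpow_mul_ofReal hp1)
      (.inr ENNReal.coe_ne_top)
  have hnear : ∀ᶠ h in 𝓝[>] (0 : ℝ), h ∈ Ioc 0 δ := Ioc_mem_nhdsGT hδ
  obtain ⟨h, hh, hle⟩ := (hnear.and (hlim.eventually_le_const (pos_iff_ne_zero.2 ht))).exists
  exact ⟨h, hh.1, hh.2, hle⟩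

lemma exists_scales (hp : 0 ≤ p) (hp1 : p < 1) {δ : ℝ} (hδ : 0 < δ) {t : ℕ → ℝ≥0∞}
    (ht : ∀ n, t n ≠ 0) :
    ∃ h : ℕ → ℝ, (∀ n, 0 < h n) ∧ h 0 ≤ δ ∧ (∀ n, h (n + 1) ≤ h n / 2) ∧
      ∀ n, (∏ j ∈ Finset.range n, 2 * ‖(h j)⁻¹‖ₑ ^ p) *
        (‖(h n)⁻¹‖ₑ ^ p * ENNReal.ofReal (2 * h n)) ≤ t n := by
  -- The state of the recursion is an upper bound for `h n` together with the product over `j < n`.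
  choose H hpos hle hsmall using fun n (s : Ioi (0 : ℝ) × ℝ≥0) => exists_scale hp1 s.2 s.1.2 (ht n)
  let S : ℕ → Ioi (0 : ℝ) × ℝ≥0 := Nat.rec (⟨δ, hδ⟩, 1) fun n s =>
    (⟨H n s / 2, half_pos (hpos n s)⟩, s.2 * (2 * ‖(H n s)⁻¹‖₊ ^ p))
  have hprod (n : ℕ) : ((S n).2 : ℝ≥0∞) = ∏ j ∈ Finset.range n, 2 * ‖(H j (S j))⁻¹‖ₑ ^ p := by
    induction n with
    | zero => rfl
    | succ n ih =>
      rw [Finset.prod_range_succ, ← ih]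
      simp [S, enorm_eq_nnnorm, ENNReal.coe_rpow_of_nonneg _ hp]
  exact ⟨fun n => H n (S n), fun n => hpos n _, hle 0 _, fun n => hle (n + 1) _,
    fun n => hprod n ▸ hsmall n (S n)⟩

lemma exists_contDiff_step (hp : 0 < p) (hp1 : p < 1) {δ : ℝ} (hδ : 0 < δ) {t : ℕ → ℝ≥0∞}
    (ht : ∀ n, t n ≠ 0) :
    ∃ ψ : ℝ → ℝ, ContDiff ℝ (⊤ : ℕ∞) ψ ∧ (∀ x, ψ x ∈ Icc (0 : ℝ) 1) ∧ (∀ x < 0, ψ x = 0) ∧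
      (∀ x, δ ≤ x → ψ x = 1) ∧
      ∀ n, lintegralRpow p (iteratedDeriv (n + 1) ψ) volume ≤ t n := by
  obtain ⟨h, hpos, h0, hhalf, hsmall⟩ := exists_scales hp.le hp1 (half_pos hδ) ht
  obtain ⟨G, hG⟩ := exists_isAveragingTower (a := fun k => 2 * h k) hpos
    (fun k => by linarith [hpos k]) (fun k => by linarith [hhalf k])
  refine ⟨G 0, hG.contDiff 0, hG.mem_Icc 0, hG.eq_zero 0,
    fun x hx => hG.eq_one 0 x (by linarith), fun n => ?_⟩
  simpa only [zero_add] using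
    (hG.lintegralRpow_iteratedDeriv_le hp hp1.le n 0).trans (by simpa using hsmall n)

end SmoothStep

section FlatApproximation

/-- The error made when the derivatives `(u, u', u'', …)` of `u` are taken as an approximation of
the sequence `(f, 0, 0, …)`. -/
noncomputable def flatJetError (f u : ℝ → ℝ) (k : ℕ) : ℝ → ℝ :=
  iteratedDeriv k u - (Pi.single 0 f : ℕ → ℝ → ℝ) k

/-- A smooth `u` is a flat approximation of `f` if it is close to `f` while all its derivatives are
close to zero; `w k` is the tolerance, in terms of `∫ |·| ^ p`, allowed in order `k`. -/
structure IsFlatApprox (p : ℝ) (w : ℕ → ℝ≥0∞) (f u : ℝ → ℝ) (ε : ℝ≥0∞) : Prop where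
  contDiff : ContDiff ℝ (⊤ : ℕ∞) u
  lintegralRpow_le : ∀ k, lintegralRpow p (flatJetError f u k) volume ≤ ε * w k

variable {p : ℝ} {w : ℕ → ℝ≥0∞} {f g u v : ℝ → ℝ} {ε ε' : ℝ≥0∞}

lemma flatJetError_zero : flatJetError f u 0 = u - f := by
  simp [flatJetError]

lemma flatJetError_succ (k : ℕ) : flatJetError f u (k + 1) = iteratedDeriv (k + 1) u := by
  simp [flatJetError]

lemma flatJetError_add (hu : ContDiff ℝ (⊤ : ℕ∞) u) (hv : ContDiff ℝ (⊤ : ℕ∞) v) (k : ℕ) :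
    flatJetError (f + g) (u + v) k = flatJetError f u k + flatJetError g v k := by
  have hderiv : iteratedDeriv k (u + v) = iteratedDeriv k u + iteratedDeriv k v :=
    funext fun x => iteratedDeriv_add (contDiff_infty.1 hu k).contDiffAt
      (contDiff_infty.1 hv k).contDiffAt
  simp only [flatJetError, hderiv, Pi.single_add, Pi.add_apply (i := k)]
  exact add_sub_add_comm _ _ _ _

lemma flatJetError_const_smul (c : ℝ) (k : ℕ) :
    flatJetError (c • f) (c • u) k = c • flatJetError f u k := by
  have hderiv : iteratedDeriv k (c • u) = c • iteratedDeriv k u :=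
    funext fun x => iteratedDeriv_const_smul_field c u
  simp only [flatJetError, hderiv, Pi.single_smul, Pi.smul_apply (i := k), smul_sub]

lemma aestronglyMeasurable_flatJetError (hf : AEStronglyMeasurable f volume)
    (hu : ContDiff ℝ (⊤ : ℕ∞) u) (k : ℕ) : AEStronglyMeasurable (flatJetError f u k) volume := by
  have hderiv : AEStronglyMeasurable (iteratedDeriv k u) volume :=
    (hu.continuous_iteratedDeriv k (by exact_mod_cast le_top)).aestronglyMeasurable
  cases k with
  | zero => exact flatJetError_zero ▸ hderiv.sub hf
  | succ k => exact flatJetError_succ k ▸ hderiv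

namespace IsFlatApprox

lemma mono (h : IsFlatApprox p w f u ε) (hε : ε ≤ ε') : IsFlatApprox p w f u ε' :=
  ⟨h.contDiff, fun k => (h.lintegralRpow_le k).trans (by gcongr)⟩

lemma add (hp : 0 ≤ p) (hp1 : p ≤ 1) (hf : AEStronglyMeasurable f volume)
    (hu : IsFlatApprox p w f u ε) (hv : IsFlatApprox p w g v ε') :
    IsFlatApprox p w (f + g) (u + v) (ε + ε') := by
  refine ⟨hu.contDiff.add hv.contDiff, fun k => ?_⟩
  rw [flatJetError_add hu.contDiff hv.contDiff, add_mul]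
  exact (lintegralRpow_add_le hp hp1 (aestronglyMeasurable_flatJetError hf hu.contDiff k)).trans
    (add_le_add (hu.lintegralRpow_le k) (hv.lintegralRpow_le k))

lemma const_smul (hp : 0 ≤ p) (c : ℝ) (hu : IsFlatApprox p w f u ε) :
    IsFlatApprox p w (c • f) (c • u) (‖c‖ₑ ^ p * ε) := by
  refine ⟨hu.contDiff.const_smul c, fun k => ?_⟩
  rw [flatJetError_const_smul, lintegralRpow_const_smul hp, mul_assoc]
  gcongr
  exact hu.lintegralRpow_le k

lemma of_lintegralRpow_sub_le (hp : 0 ≤ p) (hp1 : p ≤ 1)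
    (hg : AEStronglyMeasurable g volume) (hu : IsFlatApprox p w g u ε)
    (hfg : lintegralRpow p (f - g) volume ≤ ε' * w 0) : IsFlatApprox p w f u (ε + ε') := by
  refine ⟨hu.contDiff, fun k => ?_⟩
  cases k with
  | zero =>
    have hsplit : flatJetError f u 0 = flatJetError g u 0 - (f - g) := by
      simp only [flatJetError_zero, sub_sub, add_sub_cancel]
    rw [hsplit, add_mul]
    exact (lintegralRpow_sub_le hp hp1 (aestronglyMeasurable_flatJetError hg hu.contDiff 0)).trans
      (add_le_add (hu.lintegralRpow_le 0) hfg)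
  | succ k =>
    rw [flatJetError_succ, ← flatJetError_succ (f := g)]
    exact (hu.mono le_self_add).lintegralRpow_le (k + 1)

end IsFlatApprox

/-- The space of measurable functions that have arbitrarily good flat approximations. -/
def flatApproximable (hp : 0 < p) (hp1 : p ≤ 1) (w : ℕ → ℝ≥0∞) : Submodule ℝ (ℝ → ℝ) where
  carrier := {f | AEStronglyMeasurable f volume ∧ ∀ ε ≠ 0, ∃ u, IsFlatApprox p w f u ε}
  zero_mem' := ⟨aestronglyMeasurable_zero, fun ε _ => ⟨0, contDiff_const, fun k => by
    have herror : flatJetError 0 0 k = 0 := by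
      simpa using flatJetError_const_smul (f := 0) (u := 0) 0 k
    rw [herror, lintegralRpow_zero hp]
    exact zero_le⟩⟩
  add_mem' := by
    rintro f g ⟨hf, hfε⟩ ⟨hg, hgε⟩
    refine ⟨hf.add hg, fun ε hε => ?_⟩
    obtain ⟨u, hu⟩ := hfε (ε / 2) (ENNReal.half_pos hε).ne'
    obtain ⟨v, hv⟩ := hgε (ε / 2) (ENNReal.half_pos hε).ne'
    exact ⟨u + v, (hu.add hp.le hp1 hf hv).mono (ENNReal.add_halves ε).le⟩
  smul_mem' := by
    rintro c f ⟨hf, hfε⟩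
    refine ⟨hf.const_smul c, fun ε hε => ?_⟩
    obtain ⟨u, hu⟩ := hfε (ε / ‖c‖ₑ ^ p)
      (ENNReal.div_ne_zero.2 ⟨hε, ENNReal.rpow_ne_top_of_nonneg hp.le enorm_ne_top⟩)
    exact ⟨c • u, (hu.const_smul hp.le c).mono ENNReal.mul_div_le⟩

lemma isLpClosed_flatApproximable (hp : 0 < p) (hp1 : p ≤ 1) (hw : w 0 ≠ 0) :
    IsLpClosed (ENNReal.ofReal p) volume (flatApproximable hp hp1 w : Set (ℝ → ℝ)) := by
  refine fun f hf hclose => ⟨hf, fun ε hε => ?_⟩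
  have hε2 : ε / 2 ≠ 0 := (ENNReal.half_pos hε).ne'
  obtain ⟨g, ⟨hg, hgε⟩, hfg⟩ := hclose ((ε / 2 * w 0) ^ p⁻¹) (by simp [hε2, hw, hp, hp.le])
  obtain ⟨u, hu⟩ := hgε (ε / 2) hε2
  refine ⟨u, (hu.of_lintegralRpow_sub_le hp.le hp1 hg ?_).mono (ENNReal.add_halves ε).le⟩
  rw [lintegralRpow_eq_eLpNorm_rpow hp]
  exact (ENNReal.rpow_le_rpow hfg hp.le).trans_eq (ENNReal.rpow_inv_rpow hp.ne' _)

lemma exists_isFlatApprox_indicator_Ici (hp : 0 < p) (hp1 : p < 1) (hw : ∀ k, w k ≠ 0) (a : ℝ)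
    (hε : ε ≠ 0) : ∃ u, IsFlatApprox p w ((Ici a).indicator 1) u ε := by
  obtain ⟨δ, hδ0, hδ⟩ := ENNReal.lt_iff_exists_nnreal_btwn.1
    (pos_iff_ne_zero.2 (mul_ne_zero hε (hw 0)))
  obtain ⟨ψ, hψ, hIcc, hzero, hone, hderiv⟩ := exists_contDiff_step hp hp1 (δ := δ)
    (by exact_mod_cast hδ0) (t := fun n => ε * w (n + 1)) fun n => mul_ne_zero hε (hw _)
  refine ⟨fun x => ψ (x - a), hψ.comp (contDiff_id.sub contDiff_const), fun k => ?_⟩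
  cases k with
  | zero =>
    rw [flatJetError_zero]
    refine (lintegralRpow_le_measure hp (s := Ico a (a + δ)) (fun x => ?_) fun x hx => ?_).trans
      ((by simp : volume (Ico a (a + δ)) = δ).trans_le hδ.le)
    · have := hIcc (x - a)
      rw [Real.norm_eq_abs, abs_le]
      by_cases hx : a ≤ x <;> simp [hx] <;> constructor <;> linarith [this.1, this.2]
    · rcases lt_or_ge x a with hxa | hxa
      · simp [hxa, hzero (x - a) (by linarith)]
      · have : a + δ ≤ x := not_lt.1 fun h => hx ⟨hxa, h⟩
        simp [hxa, hone (x - a) (by linarith)]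
  | succ n =>
    rw [flatJetError_succ, iteratedDeriv_comp_sub_const, lintegralRpow_comp_sub_right]
    exact hderiv n

lemma indicator_Ico_mem_flatApproximable (hp : 0 < p) (hp1 : p < 1) (hw : ∀ k, w k ≠ 0) (a b : ℝ) :
    (Ico a b).indicator 1 ∈ flatApproximable hp hp1.le w := by
  have hIci (c : ℝ) : (Ici c).indicator 1 ∈ flatApproximable hp hp1.le w :=
    ⟨(stronglyMeasurable_one.indicator measurableSet_Ici).aestronglyMeasurable,
      fun ε hε => exists_isFlatApprox_indicator_Ici hp hp1 hw c hε⟩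
  rcases le_total b a with hba | hab
  · rw [Ico_eq_empty hba.not_gt, indicator_empty]
    exact Submodule.zero_mem _
  · rw [← Ici_sdiff_Ici, indicator_sdiff (Ici_subset_Ici.2 hab)]
    exact Submodule.sub_mem _ (hIci a) (hIci b)

lemma exists_isFlatApprox (hp : 0 < p) (hp1 : p < 1) (hw : ∀ k, w k ≠ 0)
    (hf : MemLp f (ENNReal.ofReal p) volume) (hε : ε ≠ 0) : ∃ u, IsFlatApprox p w f u ε :=
  ((isLpClosed_flatApproximable hp hp1.le (hw 0)).mem_of_memLp (by simpa using hp)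
    ENNReal.ofReal_ne_top (indicator_Ico_mem_flatApproximable hp hp1 hw) hf).2 ε hε

end FlatApproximation

section CarlemanSobolev

variable {p : ℝ} {M : ℕ → ℝ} {f u v : ℝ → ℝ} {ε ε' : ℝ≥0∞}

lemma ofReal_abs_rpow (hp : 0 ≤ p) (y : ℝ) : ENNReal.ofReal (|y| ^ p) = ‖y‖ₑ ^ p := by
  rw [Real.enorm_eq_ofReal_abs, ENNReal.ofReal_rpow_of_nonneg (abs_nonneg y) hp]

lemma aestronglyMeasurable_abs_rpow (hu : AEStronglyMeasurable u volume) :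
    AEStronglyMeasurable (fun x => |u x| ^ p) volume :=
  (hu.norm.aemeasurable.pow_const p).aestronglyMeasurable

lemma memLp'_iff_lintegralRpow_ne_top (hp : 0 ≤ p) (hu : AEStronglyMeasurable u volume) :
    MemLp' p u ↔ lintegralRpow p u volume ≠ ∞ := by
  rw [MemLp', Integrable, hasFiniteIntegral_iff_ofReal (.of_forall fun x => by positivity)]
  simp only [ofReal_abs_rpow hp, aestronglyMeasurable_abs_rpow hu, true_and]
  exact lt_top_iff_ne_top

lemma pNorm_eq_lintegralRpow (hp : 0 ≤ p) (hu : AEStronglyMeasurable u volume) :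
    pNorm p u = (lintegralRpow p u volume).toReal ^ (1 / p) := by
  rw [pNorm, integral_eq_lintegral_of_nonneg_ae (.of_forall fun x => by positivity)
    (aestronglyMeasurable_abs_rpow hu)]
  simp only [ofReal_abs_rpow hp, lintegralRpow]

lemma pNorm_nonneg : 0 ≤ pNorm p u :=
  Real.rpow_nonneg (integral_nonneg fun x => by positivity) _

lemma pNorm_sub_comm : pNorm p (u - v) = pNorm p (v - u) := by
  simp only [pNorm, Pi.sub_apply, abs_sub_comm]

/-- The weights for which `‖u‖_p ≤ r * M k` reads `∫ |u| ^ p ≤ r ^ p * rpowWeight p M k`. -/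
noncomputable def rpowWeight (p : ℝ) (M : ℕ → ℝ) (k : ℕ) : ℝ≥0∞ := ENNReal.ofReal (M k) ^ p

lemma rpowWeight_ne_zero (hM : ∀ k, 0 < M k) (k : ℕ) : rpowWeight p M k ≠ 0 :=
  (ENNReal.rpow_pos (ENNReal.ofReal_pos.2 (hM k)) ENNReal.ofReal_ne_top).ne'

lemma rpowWeight_ne_top (hp : 0 ≤ p) (k : ℕ) : rpowWeight p M k ≠ ∞ :=
  ENNReal.rpow_ne_top_of_nonneg hp ENNReal.ofReal_ne_top

lemma pNorm_div_le (hp : 0 < p) {k : ℕ} (hM : 0 < M k) (hu : AEStronglyMeasurable u volume)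
    (hε : ε ≠ ∞) (hle : lintegralRpow p u volume ≤ ε * rpowWeight p M k) :
    pNorm p u / M k ≤ ε.toReal ^ (1 / p) := by
  rw [div_le_iff₀ hM, pNorm_eq_lintegralRpow hp.le hu]
  calc (lintegralRpow p u volume).toReal ^ (1 / p)
      ≤ (ε * rpowWeight p M k).toReal ^ (1 / p) := by
        gcongr
        exact ENNReal.mul_ne_top hε (rpowWeight_ne_top hp.le k)
    _ = ε.toReal ^ (1 / p) * M k := by
        rw [rpowWeight, ENNReal.toReal_mul, ← ENNReal.toReal_rpow, ENNReal.toReal_ofReal hM.le,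
          Real.mul_rpow ENNReal.toReal_nonneg (by positivity), one_div,
          Real.rpow_rpow_inv hM.le hp.ne']

lemma tendsto_toReal_rpow_zero {ι : Type*} {l : Filter ι} {η : ι → ℝ≥0∞} (hp : 0 < p)
    (hη : Tendsto η l (𝓝 0)) : Tendsto (fun i => (η i).toReal ^ (1 / p)) l (𝓝 0) := by
  have hreal : Tendsto (fun i => (η i).toReal) l (𝓝 0) :=
    (ENNReal.tendsto_toReal ENNReal.zero_ne_top).comp hη
  simpa only [Real.zero_rpow (one_div_pos.2 hp).ne'] using
    hreal.rpow_const (p := 1 / p) (.inr (by positivity))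

lemma iteratedDeriv_sub_eq_flatJetError_sub (f : ℝ → ℝ) (hu : ContDiff ℝ (⊤ : ℕ∞) u)
    (hv : ContDiff ℝ (⊤ : ℕ∞) v) (k : ℕ) :
    iteratedDeriv k (u - v) = flatJetError f u k - flatJetError f v k := by
  rw [flatJetError, flatJetError, sub_sub_sub_cancel_right]
  exact funext fun x => iteratedDeriv_sub (contDiff_infty.1 hu k).contDiffAt
    (contDiff_infty.1 hv k).contDiffAt

namespace IsFlatApprox

lemma lintegralRpow_iteratedDeriv_ne_top (hp : 0 ≤ p) (hp1 : p ≤ 1) {w : ℕ → ℝ≥0∞}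
    (hw : ∀ k, w k ≠ ∞) (hf : AEStronglyMeasurable f volume) (hfin : lintegralRpow p f volume ≠ ∞)
    (hε : ε ≠ ∞) (hu : IsFlatApprox p w f u ε) (k : ℕ) :
    lintegralRpow p (iteratedDeriv k u) volume ≠ ∞ := by
  have herror : lintegralRpow p (flatJetError f u k) volume ≠ ∞ :=
    ne_top_of_le_ne_top (ENNReal.mul_ne_top hε (hw k)) (hu.lintegralRpow_le k)
  cases k with
  | zero =>
    have hle := lintegralRpow_add_le hp hp1 (v := flatJetError f u 0) hf
    rw [flatJetError_zero, add_sub_cancel, ← flatJetError_zero] at hle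
    rw [iteratedDeriv_zero]
    exact ne_top_of_le_ne_top (ENNReal.add_ne_top.2 ⟨hfin, herror⟩) hle
  | succ k => rwa [flatJetError_succ] at herror

lemma pNorm_flatJetError_div_le (hp : 0 < p) {k : ℕ} (hM : 0 < M k)
    (hf : AEStronglyMeasurable f volume) (hε : ε ≠ ∞)
    (hu : IsFlatApprox p (rpowWeight p M) f u ε) :
    pNorm p (flatJetError f u k) / M k ≤ ε.toReal ^ (1 / p) :=
  pNorm_div_le hp hM (aestronglyMeasurable_flatJetError hf hu.contDiff k) hε
    (hu.lintegralRpow_le k)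

lemma pNorm_sub_le (hp : 0 < p) (hM : 0 < M 0) (hf : AEStronglyMeasurable f volume)
    (hε : ε ≠ ∞) (hu : IsFlatApprox p (rpowWeight p M) f u ε) :
    pNorm p (f - u) ≤ ε.toReal ^ (1 / p) * M 0 := by
  have hle := hu.pNorm_flatJetError_div_le hp hM hf hε
  rwa [flatJetError_zero, pNorm_sub_comm, div_le_iff₀ hM] at hle

lemma pNorm_iteratedDeriv_succ_div_le (hp : 0 < p) (hM : ∀ k, 0 < M k)
    (hf : AEStronglyMeasurable f volume) (hε : ε ≠ ∞) (hu : IsFlatApprox p (rpowWeight p M) f u ε)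
    (n : ℕ) : pNorm p (iteratedDeriv (n + 1) u) / M (n + 1) ≤ ε.toReal ^ (1 / p) :=
  flatJetError_succ (f := f) (u := u) n ▸ hu.pNorm_flatJetError_div_le hp (hM _) hf hε

lemma pNorm_iteratedDeriv_div_le_max (hp : 0 < p) (hM : ∀ k, 0 < M k)
    (hf : AEStronglyMeasurable f volume) (hε : ε ≠ ∞) (hu : IsFlatApprox p (rpowWeight p M) f u ε)
    (k : ℕ) :
    pNorm p (iteratedDeriv k u) / M k ≤ max (pNorm p u / M 0) (ε.toReal ^ (1 / p)) := by
  cases k with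
  | zero => exact iteratedDeriv_zero (f := u) ▸ le_max_left _ _
  | succ n => exact (hu.pNorm_iteratedDeriv_succ_div_le hp hM hf hε n).trans (le_max_right _ _)

lemma bddAbove_range (hp : 0 < p) (hM : ∀ k, 0 < M k) (hf : AEStronglyMeasurable f volume)
    (hε : ε ≠ ∞) (hu : IsFlatApprox p (rpowWeight p M) f u ε) :
    BddAbove (range fun k => pNorm p (iteratedDeriv k u) / M k) :=
  ⟨_, forall_mem_range.2 (hu.pNorm_iteratedDeriv_div_le_max hp hM hf hε)⟩

lemma MNorm_sub_le (hp : 0 < p) (hp1 : p ≤ 1) (hM : ∀ k, 0 < M k)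
    (hf : AEStronglyMeasurable f volume) (hε : ε ≠ ∞) (hε' : ε' ≠ ∞)
    (hu : IsFlatApprox p (rpowWeight p M) f u ε) (hv : IsFlatApprox p (rpowWeight p M) f v ε') :
    MNorm p M (u - v) ≤ (ε + ε').toReal ^ (1 / p) := by
  refine ciSup_le fun k => ?_
  have hmeas := aestronglyMeasurable_flatJetError hf hu.contDiff k
  have hmeas' := aestronglyMeasurable_flatJetError hf hv.contDiff k
  rw [iteratedDeriv_sub_eq_flatJetError_sub f hu.contDiff hv.contDiff]
  refine pNorm_div_le hp (hM k) (hmeas.sub hmeas') (ENNReal.add_ne_top.2 ⟨hε, hε'⟩) ?_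
  rw [add_mul]
  exact (lintegralRpow_sub_le hp.le hp1 hmeas).trans
    (add_le_add (hu.lintegralRpow_le k) (hv.lintegralRpow_le k))

section Sequence

variable {ι : Type*} {l : Filter ι} {F : ι → ℝ → ℝ} {η : ι → ℝ≥0∞}

lemma tendsto_pNorm_sub (hp : 0 < p) (hM : 0 < M 0) (hf : AEStronglyMeasurable f volume)
    (hη : ∀ i, η i ≠ ∞) (hη0 : Tendsto η l (𝓝 0))
    (hF : ∀ i, IsFlatApprox p (rpowWeight p M) f (F i) (η i)) :
    Tendsto (fun i => pNorm p (f - F i)) l (𝓝 0) :=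
  squeeze_zero (fun _ => pNorm_nonneg) (fun i => (hF i).pNorm_sub_le hp hM hf (hη i))
    (by simpa using (tendsto_toReal_rpow_zero hp hη0).mul_const (M 0))

lemma tendsto_iSup_pNorm_iteratedDeriv_succ (hp : 0 < p) (hM : ∀ k, 0 < M k)
    (hf : AEStronglyMeasurable f volume) (hη : ∀ i, η i ≠ ∞) (hη0 : Tendsto η l (𝓝 0))
    (hF : ∀ i, IsFlatApprox p (rpowWeight p M) f (F i) (η i)) :
    Tendsto (fun i => ⨆ n : ℕ, pNorm p (iteratedDeriv (n + 1) (F i)) / M (n + 1)) l (𝓝 0) :=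
  squeeze_zero (fun _ => Real.iSup_nonneg fun _ => div_nonneg pNorm_nonneg (hM _).le)
    (fun i => ciSup_le ((hF i).pNorm_iteratedDeriv_succ_div_le hp hM hf (hη i)))
    (tendsto_toReal_rpow_zero hp hη0)

lemma tendsto_MNorm_sub (hp : 0 < p) (hp1 : p ≤ 1) (hM : ∀ k, 0 < M k)
    (hf : AEStronglyMeasurable f volume) (hη : ∀ i, η i ≠ ∞) (hη0 : Tendsto η l (𝓝 0))
    (hF : ∀ i, IsFlatApprox p (rpowWeight p M) f (F i) (η i)) :
    Tendsto (fun q : ι × ι => MNorm p M (F q.1 - F q.2)) (l ×ˢ l) (𝓝 0) := by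
  have hsum : Tendsto (fun q : ι × ι => η q.1 + η q.2) (l ×ˢ l) (𝓝 0) := by
    simpa using (hη0.comp tendsto_fst).add (hη0.comp tendsto_snd)
  exact squeeze_zero (fun _ => Real.iSup_nonneg fun k => div_nonneg pNorm_nonneg (hM k).le)
    (fun q => (hF q.1).MNorm_sub_le hp hp1 hM hf (hη q.1) (hη q.2) (hF q.2))
    (tendsto_toReal_rpow_zero hp hsum)

lemma tendsto_pNorm (hp : 0 < p) (hp1 : p ≤ 1) (hf : AEStronglyMeasurable f volume)
    (hfin : lintegralRpow p f volume ≠ ∞) (hη0 : Tendsto η l (𝓝 0))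
    (hF : ∀ i, IsFlatApprox p (rpowWeight p M) f (F i) (η i)) :
    Tendsto (fun i => pNorm p (F i)) l (𝓝 (pNorm p f)) := by
  have hmeas (i : ι) : AEStronglyMeasurable (F i) volume :=
    (hF i).contDiff.continuous.aestronglyMeasurable
  have hclose : Tendsto (fun i => lintegralRpow p (F i - f) volume) l (𝓝 0) :=
    tendsto_of_tendsto_of_tendsto_of_le_of_le tendsto_const_nhds
      (by simpa using ENNReal.Tendsto.mul_const hη0 (.inr (rpowWeight_ne_top (M := M) hp.le 0)))
      (fun _ => zero_le) fun i => flatJetError_zero (f := f) ▸ (hF i).lintegralRpow_le 0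
  simp only [pNorm_eq_lintegralRpow hp.le hf, pNorm_eq_lintegralRpow hp.le (hmeas _)]
  exact ((ENNReal.tendsto_toReal hfin).comp
    (tendsto_lintegralRpow hp.le hp1 hf hmeas hfin hclose)).rpow_const (.inr (by positivity))

lemma tendsto_MNorm (hp : 0 < p) (hp1 : p ≤ 1) (hM : ∀ k, 0 < M k)
    (hf : AEStronglyMeasurable f volume) (hfin : lintegralRpow p f volume ≠ ∞)
    (hη : ∀ i, η i ≠ ∞) (hη0 : Tendsto η l (𝓝 0))
    (hF : ∀ i, IsFlatApprox p (rpowWeight p M) f (F i) (η i)) :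
    Tendsto (fun i => MNorm p M (F i)) l (𝓝 (pNorm p f / M 0)) := by
  have hlower : Tendsto (fun i => pNorm p (F i) / M 0) l (𝓝 (pNorm p f / M 0)) :=
    (tendsto_pNorm hp hp1 hf hfin hη0 hF).div_const _
  have hupper : Tendsto (fun i => max (pNorm p (F i) / M 0) ((η i).toReal ^ (1 / p))) l
      (𝓝 (pNorm p f / M 0)) := by
    simpa only [max_eq_left (div_nonneg pNorm_nonneg (hM 0).le)] using
      hlower.max (tendsto_toReal_rpow_zero hp hη0)
  refine tendsto_of_tendsto_of_tendsto_of_le_of_le hlower hupper (fun i => ?_) fun i =>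
    ciSup_le ((hF i).pNorm_iteratedDeriv_div_le_max hp hM hf (hη i))
  simpa only [MNorm, iteratedDeriv_zero] using le_ciSup ((hF i).bddAbove_range hp hM hf (hη i)) 0

end Sequence

end IsFlatApprox

end CarlemanSobolev

theorem Lp_embeds_into_completion_general (p : ℝ) (hp : 0 < p) (hp1 : p < 1)
    (M : ℕ → ℝ) (hM : ∀ k, 0 < M k)
    (f : ℝ → ℝ) (hmeas : AEStronglyMeasurable f (volume : Measure ℝ)) (hfLp : MemLp' p f) :
    ∃ F : ℕ → ℝ → ℝ,
      (∀ i, ContDiff ℝ (⊤ : ℕ∞) (F i) ∧ (∀ n, MemLp' p (iteratedDeriv n (F i))) ∧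
        BddAbove (Set.range fun k : ℕ => pNorm p (iteratedDeriv k (F i)) / M k)) ∧
      Filter.Tendsto (fun i => pNorm p (fun x => f x - F i x)) Filter.atTop (nhds 0) ∧
      Filter.Tendsto (fun i => ⨆ n : ℕ, pNorm p (iteratedDeriv (n + 1) (F i)) / M (n + 1))
        Filter.atTop (nhds 0) ∧
      (∀ ε > 0, ∃ N, ∀ i ≥ N, ∀ j ≥ N, MNorm p M (fun x => F i x - F j x) < ε) ∧
      Filter.Tendsto (fun i => MNorm p M (F i)) Filter.atTop (nhds (pNorm p f / M 0)) := by
  have hfin := (memLp'_iff_lintegralRpow_ne_top hp.le hmeas).1 hfLp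
  obtain ⟨η, -, hη, hη0⟩ := exists_seq_strictAnti_tendsto' (ENNReal.zero_lt_top)
  have hη_top (i : ℕ) : η i ≠ ∞ := (hη i).2.ne
  choose F hF using fun i => exists_isFlatApprox hp hp1 (rpowWeight_ne_zero hM)
    (memLp_of_lintegralRpow_ne_top hp hmeas hfin) (hη i).1.ne'
  refine ⟨F, fun i => ⟨(hF i).contDiff, fun n => ?_, (hF i).bddAbove_range hp hM hmeas (hη_top i)⟩,
    IsFlatApprox.tendsto_pNorm_sub hp (hM 0) hmeas hη_top hη0 hF,
    IsFlatApprox.tendsto_iSup_pNorm_iteratedDeriv_succ hp hM hmeas hη_top hη0 hF, fun ε hε => ?_,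
    IsFlatApprox.tendsto_MNorm hp hp1.le hM hmeas hfin hη_top hη0 hF⟩
  · exact (memLp'_iff_lintegralRpow_ne_top hp.le (((hF i).contDiff.continuous_iteratedDeriv n
      (by exact_mod_cast le_top)).aestronglyMeasurable)).2
      ((hF i).lintegralRpow_iteratedDeriv_ne_top hp.le hp1.le (rpowWeight_ne_top hp.le) hmeas hfin
        (hη_top i) n)
  · have hcauchy := IsFlatApprox.tendsto_MNorm_sub hp hp1.le hM hmeas hη_top hη0 hF
    rw [prod_atTop_atTop_eq] at hcauchy
    obtain ⟨N, hN⟩ := eventually_atTop_prod_self.1 (hcauchy.eventually_lt_const hε)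
    exact ⟨N, fun i hi j hj => hN i j hi hj⟩

/-- Theorem: `L^p` embeds into `Ĉ`. Every `f ∈ L^p(ℝ)` is the `L^p`-limit of
a `‖·‖_M`-Cauchy sequence of smooth functions whose derivatives all tend to `0` in the weighted
norms, and whose `‖·‖_M`-norms tend to `‖f‖_p / M_0`. -/
theorem Lp_embeds_into_completion (p : ℝ) (hp : 0 < p) (hp1 : p < 1)
    (M : ℕ → ℝ) (hM : ∀ k, 1 ≤ M k)
    (f : ℝ → ℝ) (hmeas : AEStronglyMeasurable f (volume : Measure ℝ)) (hfLp : MemLp' p f) :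
    ∃ F : ℕ → ℝ → ℝ,
      (∀ i, ContDiff ℝ (⊤ : ℕ∞) (F i) ∧ (∀ n, MemLp' p (iteratedDeriv n (F i))) ∧
        BddAbove (Set.range fun k : ℕ => pNorm p (iteratedDeriv k (F i)) / M k)) ∧
      Filter.Tendsto (fun i => pNorm p (fun x => f x - F i x)) Filter.atTop (nhds 0) ∧
      Filter.Tendsto (fun i => ⨆ n : ℕ, pNorm p (iteratedDeriv (n + 1) (F i)) / M (n + 1))
        Filter.atTop (nhds 0) ∧
      (∀ ε > 0, ∃ N, ∀ i ≥ N, ∀ j ≥ N, MNorm p M (fun x => F i x - F j x) < ε) ∧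
      Filter.Tendsto (fun i => MNorm p M (F i)) Filter.atTop (nhds (pNorm p f / M 0)) :=
  Lp_embeds_into_completion_general p hp hp1 M (fun k => one_pos.trans_le (hM k)) f hmeas hfLp
end

section
/- Let p ∈ (0,1) and let M = (M_k)_{k≥0} satisfy M_k ≥ 1 for all k. For any ε₁ > 0 and ε₂ > 0 there exists a nonzero smooth function v : ℝ → ℝ such that: (1) ‖v^{(k)}‖_p ≤ ε₁·M_{k+1} for every k ≥ 0; (2) the support of v is contained in [0, ε₂]; and (3) ∫_ℝ v(t) dt = 1. In particular v belongs to the class C = {f smooth : ‖f‖_M < ∞}. -/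
open Real MeasureTheory Filter Set

/-!
Let `a 0, a 1, …` be positive and summable, and let `F` be the distribution function of
`∑ j, a j * U j`, where the `U j` are independent and uniform on `[0, 1]`. Conditioning on `U 0`
shows that `F` is the average of `F₁` over a box of width `a 0`, where `F₁` belongs to the shifted
sequence `a 1, a 2, …`; hence `F'` is the difference quotient of `F₁` with increment `a 0`, and by
iteration `F^(n+1)` is an `n + 1`-fold difference quotient of `F_{n+1}`. The innermost quotient is
bounded by `1 / a n` and vanishes outside an interval of length `∑ j ≥ n, a j`. As
`|x - y| ^ p ≤ |x| ^ p + |y| ^ p` for `p ≤ 1`, each of the others multiplies the integral of the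
`p`-th power by at most `2 / a j ^ p`. Therefore `v = F'` satisfies
`∫ |v^(n)| ^ p ≤ (∏ j < n, 2 / a j ^ p) * (∑ j ≥ n, a j) / a n ^ p`.
If `a (k + 1) ≤ a k / 2` for all `k`, the right side is at most
`(∏ j < n, 2 / a j ^ p) * 2 * a n ^ (1 - p)`, which for `p < 1` is as small as we like if `a n` is
chosen small enough after `a 0, …, a (n - 1)`.
-/

/-- The average of `f` over the points `x - a t`, `t ∈ [0, 1]`: for `a > 0` this is the
convolution of `f` with the normalised box `a⁻¹ 1_[0, a]`. -/
noncomputable def boxAverage (a : ℝ) (f : ℝ → ℝ) (x : ℝ) : ℝ := ∫ t in (0 : ℝ)..1, f (x - a * t)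

/-- The backward difference quotient of `f` with increment `a` (zero if `a = 0`). -/
noncomputable def bwdSlope (a : ℝ) (f : ℝ → ℝ) (x : ℝ) : ℝ := (f x - f (x - a)) / a

section BwdSlope

variable {a : ℝ} {f f' : ℝ → ℝ} {n : ℕ}

lemma measurable_bwdSlope (hf : Measurable f) : Measurable (bwdSlope a f) :=
  (hf.sub (hf.comp (measurable_id.sub_const a))).div_const a

lemma continuous_bwdSlope (hf : Continuous f) : Continuous (bwdSlope a f) := by
  unfold bwdSlope
  fun_prop

lemma contDiff_bwdSlope {m : WithTop ℕ∞} (hf : ContDiff ℝ m f) : ContDiff ℝ m (bwdSlope a f) :=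
  (hf.sub (hf.comp (contDiff_id.sub contDiff_const))).div_const a

lemma hasDerivAt_bwdSlope (hf : ∀ x, HasDerivAt f (f' x) x) (x : ℝ) :
    HasDerivAt (bwdSlope a f) (bwdSlope a f' x) x :=
  ((hf x).sub ((hf (x - a)).comp_sub_const x a)).div_const a

lemma iteratedDeriv_bwdSlope (hf : ContDiff ℝ n f) :
    iteratedDeriv n (bwdSlope a f) = bwdSlope a (iteratedDeriv n f) := by
  have hshift : ContDiff ℝ n fun x => f (x - a) := hf.comp (contDiff_id.sub contDiff_const)
  ext x
  unfold bwdSlope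
  rw [iteratedDeriv_div_const, iteratedDeriv_fun_sub hf.contDiffAt hshift.contDiffAt,
    iteratedDeriv_comp_sub_const]

end BwdSlope

section BoxAverage

variable {a c x : ℝ} {f g : ℝ → ℝ}

lemma intervalIntegrable_comp_sub_mul (hf : Monotone f) (a x u v : ℝ) :
    IntervalIntegrable (fun t => f (x - a * t)) volume u v := by
  rcases le_total 0 a with ha | ha
  · exact Antitone.intervalIntegrable fun s t hst => hf (by gcongr)
  · exact Monotone.intervalIntegrable fun s t hst =>
      hf (sub_le_sub_left (mul_le_mul_of_nonpos_left hst ha) x)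

lemma boxAverage_mono (hf : Monotone f) (hg : Monotone g) (hfg : f ≤ g) :
    boxAverage a f ≤ boxAverage a g := fun x =>
  intervalIntegral.integral_mono_on zero_le_one (intervalIntegrable_comp_sub_mul hf a x 0 1)
    (intervalIntegrable_comp_sub_mul hg a x 0 1) fun _ _ => hfg _

lemma monotone_boxAverage (hf : Monotone f) : Monotone (boxAverage a f) := fun x y hxy =>
  intervalIntegral.integral_mono_on zero_le_one (intervalIntegrable_comp_sub_mul hf a x 0 1)
    (intervalIntegrable_comp_sub_mul hf a y 0 1) fun _ _ => hf (by gcongr)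

lemma boxAverage_eq_const (h : ∀ t ∈ Icc (0 : ℝ) 1, f (x - a * t) = c) :
    boxAverage a f x = c := by
  rw [boxAverage, intervalIntegral.integral_congr (g := fun _ => c)]
  · simp
  · rwa [uIcc_of_le zero_le_one]

lemma boxAverage_le_self (hf : Monotone f) (ha : 0 ≤ a) : boxAverage a f ≤ f := fun x =>
  calc boxAverage a f x ≤ ∫ _ in (0 : ℝ)..1, f x :=
        intervalIntegral.integral_mono_on zero_le_one
          (intervalIntegrable_comp_sub_mul hf a x 0 1) intervalIntegrable_const
          fun t ht => hf (sub_le_self x (mul_nonneg ha ht.1))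
    _ = f x := by simp

lemma boxAverage_eq_bwdSlope_primitive (ha : a ≠ 0)
    (hf : ∀ u v, IntervalIntegrable f volume u v) :
    boxAverage a f = bwdSlope a fun x => ∫ t in (0 : ℝ)..x, f t := by
  ext x
  rw [boxAverage, bwdSlope, intervalIntegral.integral_comp_sub_mul _ ha,
    intervalIntegral.integral_interval_sub_left (hf _ _) (hf _ _)]
  simp [div_eq_inv_mul]

lemma continuous_boxAverage (ha : a ≠ 0) (hf : ∀ u v, IntervalIntegrable f volume u v) :
    Continuous (boxAverage a f) := by
  rw [boxAverage_eq_bwdSlope_primitive ha hf]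
  exact continuous_bwdSlope (intervalIntegral.continuous_primitive hf 0)

lemma hasDerivAt_boxAverage (ha : a ≠ 0) (hf : Continuous f) (x : ℝ) :
    HasDerivAt (boxAverage a f) (bwdSlope a f x) x := by
  rw [boxAverage_eq_bwdSlope_primitive ha fun u v => hf.intervalIntegrable u v]
  exact hasDerivAt_bwdSlope (fun y => (hf.integral_hasStrictDerivAt 0 y).hasDerivAt) x

lemma tendsto_boxAverage {u : ℕ → ℝ → ℝ} {C : ℝ} (hu : ∀ m, Measurable (u m))
    (hbound : ∀ m x, |u m x| ≤ C) (hlim : ∀ x, Tendsto (fun m => u m x) atTop (nhds (f x))) :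
    Tendsto (fun m => boxAverage a (u m) x) atTop (nhds (boxAverage a f x)) := by
  refine intervalIntegral.tendsto_integral_filter_of_dominated_convergence (fun _ => C)
    (.of_forall fun m => ?_) (.of_forall fun m => .of_forall fun t _ => hbound m _)
    intervalIntegrable_const (.of_forall fun t _ => hlim _)
  exact ((hu m).comp (by fun_prop)).aestronglyMeasurable

end BoxAverage

/-- `f` is a monotone transition from `0` to `1` that takes place inside `[0, s]`: the
distribution function of a random variable with values in `[0, s]`, up to right continuity. -/
structure IsUnitStep (s : ℝ) (f : ℝ → ℝ) : Prop where
  monotone : Monotone f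
  eq_zero : ∀ x < 0, f x = 0
  eq_one : ∀ x, s ≤ x → f x = 1

namespace IsUnitStep

variable {a s s' p : ℝ} {f : ℝ → ℝ}

lemma mono (hf : IsUnitStep s f) (hs : s ≤ s') : IsUnitStep s' f :=
  ⟨hf.monotone, hf.eq_zero, fun x hx => hf.eq_one x (hs.trans hx)⟩

lemma nonneg (hf : IsUnitStep s f) : 0 ≤ s :=
  le_of_not_gt fun hs => zero_ne_one ((hf.eq_zero s hs).symm.trans (hf.eq_one s le_rfl))

lemma mem_Icc (hf : IsUnitStep s f) (x : ℝ) : f x ∈ Icc (0 : ℝ) 1 := by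
  constructor
  · rw [← hf.eq_zero (min x (-1)) (by simp)]
    exact hf.monotone (min_le_left _ _)
  · rw [← hf.eq_one (max x s) (le_max_right _ _)]
    exact hf.monotone (le_max_left _ _)

lemma indicator_Ici : IsUnitStep 0 ((Ici (0 : ℝ)).indicator 1) where
  monotone x y hxy := by
    by_cases hx : 0 ≤ x
    · simp [hx, hx.trans hxy]
    · simp [hx, indicator_nonneg]
  eq_zero x hx := by simp [hx]
  eq_one x hx := by simp [hx]

lemma boxAverage (hf : IsUnitStep s f) (ha : 0 ≤ a) :
    IsUnitStep (s + a) (boxAverage a f) where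
  monotone := monotone_boxAverage hf.monotone
  eq_zero x hx := boxAverage_eq_const fun t ht =>
    hf.eq_zero _ (by linarith [mul_nonneg ha ht.1])
  eq_one x hx := boxAverage_eq_const fun t ht =>
    hf.eq_one _ (by linarith [mul_le_of_le_one_right ha ht.2])

lemma of_tendsto {u : ℕ → ℝ → ℝ} (hu : ∀ m, IsUnitStep s (u m))
    (hlim : ∀ x, Tendsto (fun m => u m x) atTop (nhds (f x))) : IsUnitStep s f where
  monotone x y hxy := le_of_tendsto_of_tendsto' (hlim x) (hlim y) fun m => (hu m).monotone hxy
  eq_zero x hx := tendsto_nhds_unique (hlim x) (by simp [(hu _).eq_zero x hx])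
  eq_one x hx := tendsto_nhds_unique (hlim x) (by simp [(hu _).eq_one x hx])

lemma tendsto_atBot (hf : IsUnitStep s f) : Tendsto f atBot (nhds 0) :=
  tendsto_const_nhds.congr' ((eventually_lt_atBot 0).mono fun x hx => (hf.eq_zero x hx).symm)

lemma tendsto_atTop (hf : IsUnitStep s f) : Tendsto f atTop (nhds 1) :=
  tendsto_const_nhds.congr' ((eventually_ge_atTop s).mono fun x hx => (hf.eq_one x hx).symm)

lemma abs_bwdSlope_le (hf : IsUnitStep s f) (ha : 0 < a) (x : ℝ) : |bwdSlope a f x| ≤ a⁻¹ := by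
  obtain ⟨h₀, h₁⟩ := hf.mem_Icc x
  obtain ⟨h₀', h₁'⟩ := hf.mem_Icc (x - a)
  rw [bwdSlope, abs_div, abs_of_pos ha, inv_eq_one_div]
  gcongr
  exact abs_le.2 ⟨by linarith, by linarith⟩

lemma bwdSlope_eq_zero (hf : IsUnitStep s f) (ha : 0 ≤ a) {x : ℝ} (hx : x ∉ Icc 0 (s + a)) :
    bwdSlope a f x = 0 := by
  rcases lt_or_ge x 0 with h | h
  · simp [bwdSlope, hf.eq_zero x h, hf.eq_zero (x - a) (by linarith)]
  · have hxs : s + a < x := lt_of_not_ge fun h' => hx ⟨h, h'⟩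
    simp [bwdSlope, hf.eq_one x (by linarith), hf.eq_one (x - a) (by linarith)]

lemma abs_bwdSlope_rpow_eq_zero (hf : IsUnitStep s f) (ha : 0 ≤ a) (hp : 0 < p) {x : ℝ}
    (hx : x ∉ Icc 0 (s + a)) : |bwdSlope a f x| ^ p = 0 := by
  rw [hf.bwdSlope_eq_zero ha hx, abs_zero, zero_rpow hp.ne']

lemma norm_abs_bwdSlope_rpow_le (hf : IsUnitStep s f) (ha : 0 < a) (hp : 0 ≤ p) (x : ℝ) :
    ‖|bwdSlope a f x| ^ p‖ ≤ a ^ (-p) := by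
  rw [norm_of_nonneg (by positivity), rpow_neg_eq_inv_rpow]
  exact rpow_le_rpow (abs_nonneg _) (hf.abs_bwdSlope_le ha x) hp

lemma memLp'_bwdSlope (hf : IsUnitStep s f) (ha : 0 < a) (hp : 0 < p) :
    MemLp' p (bwdSlope a f) := by
  refine IntegrableOn.integrable_of_forall_notMem_eq_zero (s := Icc 0 (s + a)) ?_
    fun x => hf.abs_bwdSlope_rpow_eq_zero ha.le hp
  refine Measure.integrableOn_of_bounded measure_Icc_lt_top.ne ?_
    (.of_forall fun x => hf.norm_abs_bwdSlope_rpow_le ha hp.le x)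
  exact ((measurable_bwdSlope hf.monotone.measurable).abs.pow_const p).aestronglyMeasurable

lemma integral_abs_bwdSlope_rpow_le (hf : IsUnitStep s f) (ha : 0 < a) (hp : 0 < p) :
    ∫ x, |bwdSlope a f x| ^ p ≤ a ^ (-p) * (s + a) := by
  rw [← setIntegral_eq_integral_of_forall_compl_eq_zero fun x =>
    hf.abs_bwdSlope_rpow_eq_zero ha.le hp]
  have hbound := norm_setIntegral_le_of_norm_le_const (μ := volume) (s := Icc 0 (s + a))
    measure_Icc_lt_top fun x _ => hf.norm_abs_bwdSlope_rpow_le ha hp.le x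
  rw [volume_real_Icc_of_le (add_nonneg hf.nonneg ha.le), sub_zero] at hbound
  exact (le_norm_self _).trans hbound

end IsUnitStep

section LpBounds

variable {a p : ℝ} {f : ℝ → ℝ}

lemma abs_bwdSlope_rpow_le (ha : 0 < a) (hp : 0 ≤ p) (hp1 : p ≤ 1) (x : ℝ) :
    |bwdSlope a f x| ^ p ≤ a ^ (-p) * (|f x| ^ p + |f (x - a)| ^ p) :=
  calc |bwdSlope a f x| ^ p = a ^ (-p) * |f x - f (x - a)| ^ p := by
        rw [bwdSlope, abs_div, abs_of_pos ha, div_rpow (abs_nonneg _) ha.le, rpow_neg ha.le,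
          div_eq_inv_mul]
    _ ≤ a ^ (-p) * (|f x| + |f (x - a)|) ^ p := by gcongr; exact abs_sub _ _
    _ ≤ a ^ (-p) * (|f x| ^ p + |f (x - a)| ^ p) := by
        gcongr
        exact rpow_add_le_add_rpow (abs_nonneg _) (abs_nonneg _) hp hp1

lemma memLp'_bwdSlope (hf : Measurable f) (hfp : MemLp' p f) (ha : 0 < a) (hp : 0 ≤ p)
    (hp1 : p ≤ 1) : MemLp' p (bwdSlope a f) := by
  refine ((hfp.add (hfp.comp_sub_right a)).const_mul (a ^ (-p))).mono'
    ((measurable_bwdSlope hf).abs.pow_const p).aestronglyMeasurable (.of_forall fun x => ?_)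
  rw [norm_of_nonneg (by positivity)]
  exact abs_bwdSlope_rpow_le ha hp hp1 x

lemma integral_abs_bwdSlope_rpow_le (hfp : MemLp' p f) (ha : 0 < a) (hp : 0 ≤ p) (hp1 : p ≤ 1) :
    ∫ x, |bwdSlope a f x| ^ p ≤ 2 * a ^ (-p) * ∫ x, |f x| ^ p := by
  have hshift : Integrable fun x => |f (x - a)| ^ p := hfp.comp_sub_right a
  calc ∫ x, |bwdSlope a f x| ^ p ≤ ∫ x, a ^ (-p) * (|f x| ^ p + |f (x - a)| ^ p) :=
        integral_mono_of_nonneg (.of_forall fun x => by positivity)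
          ((hfp.add hshift).const_mul _) (.of_forall fun x => abs_bwdSlope_rpow_le ha hp hp1 x)
    _ = 2 * a ^ (-p) * ∫ x, |f x| ^ p := by
        rw [integral_const_mul, integral_add hfp hshift,
          integral_sub_right_eq_self (fun x => |f x| ^ p) a]
        ring

end LpBounds

/-- The jump at `0`, averaged successively over boxes of widths `a (m - 1), …, a 1, a 0`: the
distribution function of `∑ j < m, a j * U j` with `U j` independent and uniform on `[0, 1]`. -/
noncomputable def stepApprox : (ℕ → ℝ) → ℕ → ℝ → ℝ
  | _, 0 => (Ici 0).indicator 1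
  | a, m + 1 => boxAverage (a 0) (stepApprox (fun k => a (k + 1)) m)

/-- The distribution function of `∑ j, a j * U j` with `U j` independent and uniform on `[0, 1]`,
encoded as the decreasing limit of `stepApprox a`. -/
noncomputable def smoothedStep (a : ℕ → ℝ) (x : ℝ) : ℝ := ⨅ m, stepApprox a m x

section SmoothedStep

variable {a : ℕ → ℝ} {p : ℝ}

lemma isUnitStep_stepApprox (ha : ∀ k, 0 ≤ a k) (m : ℕ) :
    IsUnitStep (∑ j ∈ Finset.range m, a j) (stepApprox a m) := by
  induction m generalizing a with
  | zero => simpa [stepApprox] using IsUnitStep.indicator_Ici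
  | succ m ih =>
    rw [Finset.sum_range_succ']
    exact (ih fun k => ha (k + 1)).boxAverage (ha 0)

lemma antitone_stepApprox (ha : ∀ k, 0 ≤ a k) : Antitone (stepApprox a) := by
  refine antitone_nat_of_succ_le fun m => ?_
  induction m generalizing a with
  | zero => exact boxAverage_le_self IsUnitStep.indicator_Ici.monotone (ha 0)
  | succ m ih =>
    have ha' : ∀ k, 0 ≤ a (k + 1) := fun k => ha (k + 1)
    exact boxAverage_mono (isUnitStep_stepApprox ha' _).monotone
      (isUnitStep_stepApprox ha' _).monotone (ih ha')

lemma tendsto_stepApprox (ha : ∀ k, 0 ≤ a k) (x : ℝ) :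
    Tendsto (fun m => stepApprox a m x) atTop (nhds (smoothedStep a x)) :=
  tendsto_atTop_ciInf (fun _ _ h => antitone_stepApprox ha h x)
    ⟨0, forall_mem_range.2 fun m => ((isUnitStep_stepApprox ha m).mem_Icc x).1⟩

lemma isUnitStep_smoothedStep (ha : ∀ k, 0 ≤ a k) (hsum : Summable a) :
    IsUnitStep (∑' j, a j) (smoothedStep a) :=
  .of_tendsto (fun m => (isUnitStep_stepApprox ha m).mono (hsum.sum_le_tsum _ fun j _ => ha j))
    (tendsto_stepApprox ha)

lemma smoothedStep_eq_boxAverage (ha : ∀ k, 0 ≤ a k) :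
    smoothedStep a = boxAverage (a 0) (smoothedStep fun k => a (k + 1)) := by
  have ha' : ∀ k, 0 ≤ a (k + 1) := fun k => ha (k + 1)
  ext x
  refine tendsto_nhds_unique ((tendsto_add_atTop_iff_nat 1).2 (tendsto_stepApprox ha x))
    (tendsto_boxAverage (fun m => (isUnitStep_stepApprox ha' m).monotone.measurable)
      (C := 1) (fun m y => ?_) (tendsto_stepApprox ha'))
  have hmem := (isUnitStep_stepApprox ha' m).mem_Icc y
  exact (abs_of_nonneg hmem.1).trans_le hmem.2

lemma monotone_smoothedStep (ha : ∀ k, 0 ≤ a k) : Monotone (smoothedStep a) := fun x y hxy =>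
  le_of_tendsto_of_tendsto' (tendsto_stepApprox ha x) (tendsto_stepApprox ha y)
    fun m => (isUnitStep_stepApprox ha m).monotone hxy

lemma continuous_smoothedStep (ha : ∀ k, 0 < a k) : Continuous (smoothedStep a) := by
  rw [smoothedStep_eq_boxAverage fun k => (ha k).le]
  exact continuous_boxAverage (ha 0).ne' fun u v =>
    (monotone_smoothedStep fun k => (ha (k + 1)).le).intervalIntegrable

lemma hasDerivAt_smoothedStep (ha : ∀ k, 0 < a k) (x : ℝ) :
    HasDerivAt (smoothedStep a) (bwdSlope (a 0) (smoothedStep fun k => a (k + 1)) x) x := by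
  rw [smoothedStep_eq_boxAverage fun k => (ha k).le]
  exact hasDerivAt_boxAverage (ha 0).ne' (continuous_smoothedStep fun k => ha (k + 1)) x

lemma deriv_smoothedStep (ha : ∀ k, 0 < a k) :
    deriv (smoothedStep a) = bwdSlope (a 0) (smoothedStep fun k => a (k + 1)) :=
  funext fun x => (hasDerivAt_smoothedStep ha x).deriv

lemma contDiff_smoothedStep (ha : ∀ k, 0 < a k) (n : ℕ) : ContDiff ℝ n (smoothedStep a) := by
  induction n generalizing a with
  | zero => exact contDiff_zero.2 (continuous_smoothedStep ha)
  | succ n ih =>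
    push_cast
    refine contDiff_succ_iff_deriv.2
      ⟨fun x => (hasDerivAt_smoothedStep ha x).differentiableAt, by simp, ?_⟩
    rw [deriv_smoothedStep ha]
    exact contDiff_bwdSlope (ih fun k => ha (k + 1))

lemma iteratedDeriv_succ_smoothedStep (ha : ∀ k, 0 < a k) (n : ℕ) :
    iteratedDeriv (n + 1) (smoothedStep a) =
      bwdSlope (a 0) (iteratedDeriv n (smoothedStep fun k => a (k + 1))) := by
  rw [iteratedDeriv_succ', deriv_smoothedStep ha,
    iteratedDeriv_bwdSlope (contDiff_smoothedStep (fun k => ha (k + 1)) n)]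

lemma memLp'_iteratedDeriv_smoothedStep (ha : ∀ k, 0 < a k) (hsum : Summable a) (hp : 0 < p)
    (hp1 : p ≤ 1) (n : ℕ) : MemLp' p (iteratedDeriv (n + 1) (smoothedStep a)) := by
  induction n generalizing a with
  | zero =>
    have hstep := isUnitStep_smoothedStep (fun k => (ha (k + 1)).le)
      ((summable_nat_add_iff 1).2 hsum)
    rw [iteratedDeriv_succ_smoothedStep ha, iteratedDeriv_zero]
    exact hstep.memLp'_bwdSlope (ha 0) hp
  | succ n ih =>
    have ha' : ∀ k, 0 < a (k + 1) := fun k => ha (k + 1)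
    have hcont := (contDiff_smoothedStep ha' (n + 1)).continuous_iteratedDeriv' (n + 1)
    rw [iteratedDeriv_succ_smoothedStep ha]
    exact memLp'_bwdSlope hcont.measurable (ih ha' ((summable_nat_add_iff 1).2 hsum)) (ha 0)
      hp.le hp1

lemma integral_abs_iteratedDeriv_smoothedStep_rpow_le (ha : ∀ k, 0 < a k) (hsum : Summable a)
    (hp : 0 < p) (hp1 : p ≤ 1) (n : ℕ) :
    ∫ x, |iteratedDeriv (n + 1) (smoothedStep a) x| ^ p ≤
      (∏ j ∈ Finset.range n, 2 * a j ^ (-p)) * (a n ^ (-p) * ∑' j, a (n + j)) := by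
  induction n generalizing a with
  | zero =>
    have hstep := isUnitStep_smoothedStep (fun k => (ha (k + 1)).le)
      ((summable_nat_add_iff 1).2 hsum)
    simpa [iteratedDeriv_succ_smoothedStep ha, hsum.tsum_eq_zero_add, add_comm (a 0)] using
      hstep.integral_abs_bwdSlope_rpow_le (ha 0) hp
  | succ n ih =>
    have h0 := ha 0
    have ha' : ∀ k, 0 < a (k + 1) := fun k => ha (k + 1)
    have hsum' : Summable fun k => a (k + 1) := (summable_nat_add_iff 1).2 hsum
    calc ∫ x, |iteratedDeriv (n + 2) (smoothedStep a) x| ^ p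
        ≤ 2 * a 0 ^ (-p) *
            ∫ x, |iteratedDeriv (n + 1) (smoothedStep fun k => a (k + 1)) x| ^ p := by
          rw [iteratedDeriv_succ_smoothedStep ha]
          exact integral_abs_bwdSlope_rpow_le
            (memLp'_iteratedDeriv_smoothedStep ha' hsum' hp hp1 n) h0 hp.le hp1
      _ ≤ 2 * a 0 ^ (-p) * ((∏ j ∈ Finset.range n, 2 * a (j + 1) ^ (-p)) *
            (a (n + 1) ^ (-p) * ∑' j, a (n + j + 1))) := by
          gcongr
          exact ih ha' hsum'
      _ = (∏ j ∈ Finset.range (n + 1), 2 * a j ^ (-p)) *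
            (a (n + 1) ^ (-p) * ∑' j, a (n + 1 + j)) := by
          rw [Finset.prod_range_succ']
          simp only [add_right_comm n _ 1]
          ring

lemma support_deriv_smoothedStep_subset (ha : ∀ k, 0 < a k) (hsum : Summable a) :
    Function.support (deriv (smoothedStep a)) ⊆ Icc 0 (∑' j, a j) := by
  have hstep := isUnitStep_smoothedStep (fun k => (ha (k + 1)).le)
    ((summable_nat_add_iff 1).2 hsum)
  rw [hsum.tsum_eq_zero_add, add_comm, deriv_smoothedStep ha]
  exact fun x hx => not_not.1 fun h => hx (hstep.bwdSlope_eq_zero (ha 0).le h)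

lemma integral_deriv_smoothedStep (ha : ∀ k, 0 < a k) (hsum : Summable a) :
    ∫ x, deriv (smoothedStep a) x = 1 := by
  have hstep := isUnitStep_smoothedStep (fun k => (ha k).le) hsum
  have hdiff := contDiff_smoothedStep ha 1
  have hint : Integrable (deriv (smoothedStep a)) :=
    (hdiff.continuous_deriv le_rfl).integrable_of_hasCompactSupport
      (.of_support_subset_isCompact isCompact_Icc (support_deriv_smoothedStep_subset ha hsum))
  rw [integral_of_hasDerivAt_of_tendsto
    (fun x => (hdiff.differentiable one_ne_zero x).hasDerivAt) hint hstep.tendsto_atBot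
    hstep.tendsto_atTop, sub_zero]

end SmoothedStep

section Widths

lemma summable_of_two_mul_succ_le {a : ℕ → ℝ} (ha : ∀ k, 0 ≤ a k)
    (hhalf : ∀ k, 2 * a (k + 1) ≤ a k) : Summable a :=
  .of_nonneg_of_le ha
    (fun k => le_geom (c := 1 / 2) (by norm_num) k fun j _ => by linarith [hhalf j])
    (summable_geometric_two.mul_right _)

lemma tsum_le_two_mul_of_two_mul_succ_le {a : ℕ → ℝ} (ha : ∀ k, 0 ≤ a k)
    (hhalf : ∀ k, 2 * a (k + 1) ≤ a k) : ∑' k, a k ≤ 2 * a 0 := by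
  rw [← tsum_geometric_two, ← tsum_mul_right]
  exact (summable_of_two_mul_succ_le ha hhalf).tsum_le_tsum
    (fun k => le_geom (by norm_num) k fun j _ => by linarith [hhalf j])
    (summable_geometric_two.mul_right _)

lemma exists_pos_le_mul_rpow_le {q r c d : ℝ} (hq : 0 < q) (hr : 0 < r) (hc : 0 < c)
    (hd : 0 < d) : ∃ b, 0 < b ∧ b ≤ r ∧ c * b ^ q ≤ d := by
  refine ⟨min r ((d / c) ^ q⁻¹), lt_min hr (by positivity), min_le_left _ _, ?_⟩
  calc c * min r ((d / c) ^ q⁻¹) ^ q ≤ c * ((d / c) ^ q⁻¹) ^ q := by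
        gcongr; exact min_le_right _ _
    _ = d := by rw [rpow_inv_rpow (by positivity) hq.ne', mul_div_cancel₀ _ hc.ne']

lemma exists_widths {p r : ℝ} (hp1 : p < 1) (hr : 0 < r) {δ : ℕ → ℝ} (hδ : ∀ k, 0 < δ k) :
    ∃ a : ℕ → ℝ, (∀ k, 0 < a k) ∧ a 0 ≤ r ∧ (∀ k, 2 * a (k + 1) ≤ a k) ∧
      ∀ k, (∏ j ∈ Finset.range k, 2 * a j ^ (-p)) * (2 * a k ^ (1 - p)) ≤ δ k := by
  have hchoice : ∀ s c d : ℝ, 0 < s → 0 < c → 0 < d →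
      ∃ b, 0 < b ∧ b ≤ s ∧ c * (2 * b ^ (1 - p)) ≤ d := fun s c d hs hc hd => by
    simpa only [mul_assoc] using
      exists_pos_le_mul_rpow_le (sub_pos.2 hp1) hs (mul_pos hc two_pos) hd
  choose! w hw_pos hw_le hw_mul using hchoice
  -- The state after `k` choices: the upper bound for the next width, and the product so far.
  let state : ℕ → ℝ × ℝ := fun n => n.rec (r, 1) fun k s =>
    (w s.1 s.2 (δ k) / 2, s.2 * (2 * w s.1 s.2 (δ k) ^ (-p)))
  let a : ℕ → ℝ := fun k => w (state k).1 (state k).2 (δ k)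
  have hstate : ∀ k, 0 < (state k).1 ∧ 0 < (state k).2 := fun k => by
    induction k with
    | zero => exact ⟨hr, one_pos⟩
    | succ k ih =>
      have := hw_pos _ _ _ ih.1 ih.2 (hδ k)
      exact ⟨half_pos this, mul_pos ih.2 (by positivity)⟩
  have ha_le : ∀ k, a k ≤ (state k).1 := fun k => hw_le _ _ _ (hstate k).1 (hstate k).2 (hδ k)
  refine ⟨a, fun k => hw_pos _ _ _ (hstate k).1 (hstate k).2 (hδ k), ha_le 0, fun k => ?_,
    fun k => ?_⟩
  · have : a (k + 1) ≤ a k / 2 := ha_le (k + 1)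
    linarith
  · rw [Finset.prod_range_induction _ (fun k => (state k).2) rfl k fun _ _ => rfl]
    exact hw_mul _ _ _ (hstate k).1 (hstate k).2 (hδ k)

end Widths

lemma pNorm_le_of_integral_le {p δ : ℝ} {f : ℝ → ℝ} (hp : 0 < p) (hδ : 0 ≤ δ)
    (h : ∫ x, |f x| ^ p ≤ δ ^ p) : pNorm p f ≤ δ := by
  rw [pNorm, one_div, rpow_inv_le_iff_of_pos (by positivity) hδ hp]
  exact h

theorem exists_contDiff_pNorm_iteratedDeriv_le {p r : ℝ} (hp : 0 < p) (hp1 : p < 1) (hr : 0 < r)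
    {δ : ℕ → ℝ} (hδ : ∀ k, 0 < δ k) :
    ∃ v : ℝ → ℝ, ContDiff ℝ (⊤ : ℕ∞) v ∧ (∀ k, MemLp' p (iteratedDeriv k v)) ∧
      (∀ k, pNorm p (iteratedDeriv k v) ≤ δ k) ∧ Function.support v ⊆ Icc 0 r ∧
      ∫ t, v t = 1 := by
  obtain ⟨a, ha, ha0, hhalf, hprod⟩ :=
    exists_widths hp1 (half_pos hr) fun k => rpow_pos_of_pos (hδ k) p
  have hsum := summable_of_two_mul_succ_le (fun k => (ha k).le) hhalf
  have htail : ∀ k, ∑' j, a (k + j) ≤ 2 * a k := fun k =>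
    tsum_le_two_mul_of_two_mul_succ_le (fun j => (ha (k + j)).le) fun j => hhalf (k + j)
  refine ⟨deriv (smoothedStep a), ?_, fun k => ?_, fun k => ?_, ?_,
    integral_deriv_smoothedStep ha hsum⟩
  · exact (contDiff_infty_iff_deriv.1 (contDiff_infty.2 (contDiff_smoothedStep ha))).2
  · rw [← iteratedDeriv_succ']
    exact memLp'_iteratedDeriv_smoothedStep ha hsum hp hp1.le k
  · rw [← iteratedDeriv_succ']
    refine pNorm_le_of_integral_le hp (hδ k).le
      ((integral_abs_iteratedDeriv_smoothedStep_rpow_le ha hsum hp hp1.le k).trans ?_)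
    refine le_trans ?_ (hprod k)
    have hsplit : 2 * a k ^ (1 - p) = a k ^ (-p) * (2 * a k) := by
      rw [sub_eq_neg_add, rpow_add (ha k), rpow_one]
      ring
    rw [hsplit]
    gcongr
    · exact Finset.prod_nonneg fun j _ => by have := ha j; positivity
    · have := ha k; positivity
    · exact htail k
  · refine (support_deriv_smoothedStep_subset ha hsum).trans (Icc_subset_Icc_right ?_)
    linarith [tsum_le_two_mul_of_two_mul_succ_le (fun k => (ha k).le) hhalf]

theorem exists_mollifier_in_C_general (p : ℝ) (hp : 0 < p) (hp1 : p < 1)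
    (M : ℕ → ℝ) (hM : ∀ k, 0 < M k) (ε₁ ε₂ : ℝ) (hε₁ : 0 < ε₁) (hε₂ : 0 < ε₂) :
    ∃ v : ℝ → ℝ, v ≠ 0 ∧ ContDiff ℝ (⊤ : ℕ∞) v ∧
      (∀ k, MemLp' p (iteratedDeriv k v)) ∧
      (∀ k, pNorm p (iteratedDeriv k v) ≤ ε₁ * M (k + 1)) ∧
      Function.support v ⊆ Set.Icc 0 ε₂ ∧
      (∫ t : ℝ, v t) = 1 ∧
      BddAbove (Set.range fun k : ℕ => pNorm p (iteratedDeriv k v) / M k) := by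
  obtain ⟨v, hsmooth, hLp, hnorm, hsupp, hint⟩ :=
    exists_contDiff_pNorm_iteratedDeriv_le hp hp1 hε₂
      fun k => mul_pos hε₁ (lt_min (hM k) (hM (k + 1)))
  refine ⟨v, ?_, hsmooth, hLp, fun k => ?_, hsupp, hint, ε₁, forall_mem_range.2 fun k => ?_⟩
  · rintro rfl
    simp at hint
  · exact (hnorm k).trans (by gcongr; exact min_le_right _ _)
  · exact (div_le_iff₀ (hM k)).2 ((hnorm k).trans (by gcongr; exact min_le_left _ _))

/-- Lemma: mollifiers in `C`. For any `ε₁, ε₂ > 0` there is a nonzero smooth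
`v` with `‖v^(k)‖_p ≤ ε₁ M_{k+1}` for all `k`, support contained in `[0, ε₂]`, and integral `1`;
in particular `v` lies in the class `C`. -/
theorem exists_mollifier_in_C (p : ℝ) (hp : 0 < p) (hp1 : p < 1)
    (M : ℕ → ℝ) (hM : ∀ k, 1 ≤ M k) (ε₁ ε₂ : ℝ) (hε₁ : 0 < ε₁) (hε₂ : 0 < ε₂) :
    ∃ v : ℝ → ℝ, v ≠ 0 ∧ ContDiff ℝ (⊤ : ℕ∞) v ∧
      (∀ k, MemLp' p (iteratedDeriv k v)) ∧
      (∀ k, pNorm p (iteratedDeriv k v) ≤ ε₁ * M (k + 1)) ∧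
      Function.support v ⊆ Set.Icc 0 ε₂ ∧
      (∫ t : ℝ, v t) = 1 ∧
      BddAbove (Set.range fun k : ℕ => pNorm p (iteratedDeriv k v) / M k) :=
  exists_mollifier_in_C_general p hp hp1 M (fun k => one_pos.trans_le (hM k)) ε₁ ε₂ hε₁ hε₂
end
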